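/- arXiv:1607.04128 — 12 statements merged into one kernel-verified Lean document; each statement's English description precedes it below -/
import Mathlib

section
/- There exists a complete lattice Z such that the binary supremum function (z, z') ↦ z ⊔ z' from Z × Z to Z is not continuous when Z × Z carries the product topology of the Scott topology on each copy of Z and Z carries the Scott topology. -/
/-- The property that the binary supremum function on a complete lattice `Z` is *not*
continuous from `Z × Z` (with the product topology of the Scott topology on each copy of `Z`)
to `Z` (with the Scott topology). -/
def SupDiscontinuousProdScott (Z : Type) [CompleteLattice Z] : Prop :=
  letI : TopologicalSpace Z := Topology.scott Z Set.univ
  ¬ Continuous (fun p : Z × Z => p.1 ⊔ p.2)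

def XL : Type := {x : ℕ → ℕ∞ // x = ⊤ ∨ ∀ n, x n ≠ ⊤}

namespace XL

instance : PartialOrder XL := inferInstanceAs (PartialOrder {x : ℕ → ℕ∞ // x = ⊤ ∨ ∀ n, x n ≠ ⊤})

noncomputable instance : InfSet XL := ⟨fun S => ⟨sInf (Subtype.val '' S), by
  by_cases h : ∀ s ∈ S, s.1 = ⊤
  · left
    rw [sInf_eq_top]
    rintro _ ⟨s, hs, rfl⟩
    exact h s hs
  · right
    push Not at h
    obtain ⟨s, hs, hne⟩ := h
    intro n hn
    have h1 : sInf (Subtype.val '' S) ≤ s.1 := sInf_le ⟨s, hs, rfl⟩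
    have h2 := h1 n
    rw [hn, top_le_iff] at h2
    exact (s.2.resolve_left hne) n h2⟩⟩

noncomputable instance : CompleteLattice XL := completeLatticeOfInf XL (fun S => by
  constructor
  · intro s hs
    exact (sInf_le ⟨s, hs, rfl⟩ : sInf (Subtype.val '' S) ≤ s.1)
  · intro b hb
    refine (le_sInf ?_ : b.1 ≤ sInf (Subtype.val '' S))
    rintro _ ⟨s, hs, rfl⟩
    exact hb hs)

/-- finite elements -/
def mk (g : ℕ → ℕ) : XL := ⟨fun n => (g n : ℕ∞), Or.inr fun _ => ENat.natCast_ne_top _⟩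

lemma mk_le {g h : ℕ → ℕ} : mk g ≤ mk h ↔ ∀ n, g n ≤ h n := by
  constructor
  · intro H n
    have h1 : ((g n : ℕ) : ℕ∞) ≤ (h n : ℕ∞) := H n
    exact_mod_cast h1
  · intro H n
    have h1 : ((g n : ℕ) : ℕ∞) ≤ (h n : ℕ∞) := by exact_mod_cast H n
    exact h1

lemma eq_top_of {u : XL} (n : ℕ) (h : ∀ k : ℕ, mk (Pi.single n k) ≤ u) : u = ⊤ := by
  have h1 : u.1 n = ⊤ := by
    rw [ENat.eq_top_iff_forall_ge]
    intro k
    have h2 : ((Pi.single n k : ℕ → ℕ) n : ℕ∞) ≤ u.1 n := h k n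
    simpa using h2
  have h3 : u.1 = ⊤ := u.2.resolve_right fun h => h n h1
  rw [eq_top_iff]
  intro m
  rw [h3]
  exact le_top

lemma le_zero_of {u : XL} (f : ℕ → ℕ) (h : ∀ N : ℕ, u ≤ mk (fun n => if n < N then 0 else f n)) :
    u ≤ mk 0 := by
  intro n
  have h1 : u.1 n ≤ ((if n < n + 1 then 0 else f n : ℕ) : ℕ∞) := h (n+1) n
  simpa [mk] using h1

end XL

open Topology in
theorem main_aux : @SupDiscontinuousProdScott (XL × XLᵒᵈ) inferInstance := by
  unfold SupDiscontinuousProdScott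
  letI tZ : TopologicalSpace (XL × XLᵒᵈ) := Topology.scott (XL × XLᵒᵈ) Set.univ
  intro hc
  have : IsScott (XL × XLᵒᵈ) Set.univ := ⟨rfl⟩
  let W : Set (XL × XLᵒᵈ) := {p | ¬ p.1 ≤ OrderDual.ofDual p.2}
  have hW : IsOpen W := by
    rw [IsScott.isOpen_iff_isUpperSet_and_dirSupInaccOn (D := Set.univ)]
    constructor
    · rintro ⟨a, b⟩ ⟨c, d⟩ ⟨h1, h2⟩ h3 h4
      exact h3 (le_trans h1 (le_trans h4 h2))
    · rintro D - hne hdir ⟨a, b⟩ hlub hab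
      by_contra hcon
      have hD : ∀ d ∈ D, d.1 ≤ OrderDual.ofDual d.2 := by
        intro d hd
        by_contra h
        exact hcon ⟨d, hd, h⟩
      have key : ∀ d ∈ D, ∀ e ∈ D, d.1 ≤ OrderDual.ofDual e.2 := by
        intro d hd e he
        obtain ⟨z, hz, hdz, hez⟩ := hdir d hd e he
        exact le_trans hdz.1 (le_trans (hD z hz) hez.2)
      rw [isLUB_prod] at hlub
      apply hab
      apply hlub.1.2
      rintro _ ⟨d, hd, rfl⟩
      have : b ≤ OrderDual.toDual d.1 := by
        apply hlub.2.2
        rintro _ ⟨e, he, rfl⟩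
        exact key d hd e he
      exact this
  have hpre := hc.isOpen_preimage W hW
  rw [isOpen_prod_iff] at hpre
  obtain ⟨A, B, hA, hB, hpA, hpB, hAB⟩ := hpre (⊤, OrderDual.toDual ⊤) (⊥, OrderDual.toDual (XL.mk 0)) (by
    intro h
    have h1 : (⊤ : XL) ≤ XL.mk 0 := le_trans le_sup_left (le_trans h inf_le_right)
    have h2 : XL.mk 1 ≤ XL.mk 0 := le_trans le_top h1
    have := XL.mk_le.1 h2 0
    simp at this)
  have meet : ∀ U : Set (XL × XLᵒᵈ), IsOpen U → ∀ (c : ℕ → XL × XLᵒᵈ), Monotone c → ∀ a, a ∈ U →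
      IsLUB (Set.range c) a → ∃ k, c k ∈ U := by
    intro U hU c hmono a ha hl
    rw [IsScott.isOpen_iff_isUpperSet_and_dirSupInaccOn (D := Set.univ)] at hU
    obtain ⟨_, ⟨k, rfl⟩, hk⟩ := hU.2 (Set.mem_univ (Set.range c)) (Set.range_nonempty c)
      (directedOn_range.2 hmono.directed_le) hl ha
    exact ⟨k, hk⟩
  have h1 : ∀ n, ∃ k, ((XL.mk (Pi.single n k), OrderDual.toDual ⊤) : XL × XLᵒᵈ) ∈ A := by
    intro n
    refine meet A hA (fun k => (XL.mk (Pi.single n k), OrderDual.toDual ⊤)) ?_ _ hpA ?_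
    · intro k l hkl
      exact ⟨XL.mk_le.2 fun m => (Pi.single_mono n hkl) m, le_rfl⟩
    · constructor
      · rintro _ ⟨k, rfl⟩
        exact ⟨le_top, le_rfl⟩
      · rintro ⟨u, v⟩ hu
        refine ⟨?_, (hu ⟨0, rfl⟩).2⟩
        rw [XL.eq_top_of n (u := u) fun k => (hu ⟨k, rfl⟩).1]
  choose f hf using h1
  obtain ⟨N, hN⟩ := meet B hB
    (fun N => (⊥, OrderDual.toDual (XL.mk (fun n => if n < N then 0 else f n)))) (by
      intro k l hkl
      refine ⟨le_rfl, OrderDual.toDual_le_toDual.2 (XL.mk_le.2 fun m => ?_)⟩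
      split_ifs <;> omega) _ hpB (by
      constructor
      · rintro _ ⟨k, rfl⟩
        exact ⟨le_rfl, OrderDual.toDual_le_toDual.2 (XL.mk_le.2 fun m => Nat.zero_le _)⟩
      · rintro ⟨u, v⟩ hu
        refine ⟨bot_le, ?_⟩
        exact XL.le_zero_of (u := OrderDual.ofDual v) f fun k => (hu ⟨k, rfl⟩).2)
  have h2 := hAB (Set.mk_mem_prod (hf N) hN)
  apply h2
  refine sup_le (le_inf le_top ?_) bot_le
  refine XL.mk_le.2 fun m => ?_
  by_cases hm : m = N
  · subst hm; simp
  · simp [Pi.single_eq_of_ne hm]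

/-- There exists a complete lattice `Z` such that the binary supremum function
`(z, z') ↦ z ⊔ z'` from `Z × Z` to `Z` is not continuous when `Z × Z` carries the product
topology of the Scott topology on each copy of `Z` and `Z` carries the Scott topology. -/
theorem stmt_0 : ∃ (Z : Type) (cZ : CompleteLattice Z), @SupDiscontinuousProdScott Z cZ := by
  exact ⟨XL × XLᵒᵈ, inferInstance, main_aux⟩
end

section
/- There exist a topological space X, a complete lattice Z, and two functions f, g : X → Z, each continuous with respect to the topology on X and the Scott topology on Z, such that the set {f, g} has no least upper bound in the partially ordered set of all continuous functions from X to Z (with Scott topology on Z) ordered pointwise; in particular the poset of such continuous functions is not bounded complete. -/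
/-- On `X` a topological space and `Z` a complete lattice with the Scott topology:
there exist continuous `f g : X → Z` such that `{f, g}` has no least upper bound in the
pointwise-ordered poset of continuous functions, and that poset is not bounded complete. -/
def NoLubOfPairAndNotBoundedComplete (X Z : Type) [TopologicalSpace X] [CompleteLattice Z] :
    Prop :=
  letI : TopologicalSpace Z := Topology.scott Z Set.univ
  ∃ f g : X → Z, Continuous f ∧ Continuous g ∧
    -- the set {f, g} has no least upper bound in the poset of continuous functions,
    -- ordered pointwise
    (¬ ∃ h : X → Z, Continuous h ∧ f ≤ h ∧ g ≤ h ∧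
        ∀ k : X → Z, Continuous k → f ≤ k → g ≤ k → h ≤ k) ∧
    -- in particular, the poset of continuous functions is not bounded complete
    ¬ (∀ F : Set (X → Z), (∀ j ∈ F, Continuous j) →
        (∃ b : X → Z, Continuous b ∧ ∀ j ∈ F, j ≤ b) →
        ∃ s : X → Z, Continuous s ∧ (∀ j ∈ F, j ≤ s) ∧
          ∀ b : X → Z, Continuous b → (∀ j ∈ F, j ≤ b) → s ≤ b)

inductive Fan (I : Type) : Type
  | bot : Fan I
  | top : Fan I
  | mid : I → ℕ → Fan I

namespace Fan

variable {I : Type}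

def le : Fan I → Fan I → Prop
  | bot, _ => True
  | _, top => True
  | mid i n, mid j m => i = j ∧ n ≤ m
  | _, _ => False

instance : PartialOrder (Fan I) where
  le := le
  le_refl a := by cases a <;> simp [le]
  le_trans a b c := by
    cases a <;> cases b <;> cases c <;> simp [le]
    rintro rfl h rfl h'
    exact ⟨rfl, h.trans h'⟩
  le_antisymm a b := by
    cases a <;> cases b <;> simp [le]
    rintro rfl h _ h'
    exact ⟨rfl, le_antisymm h h'⟩

theorem bot_le' (a : Fan I) : bot ≤ a := by
  change le _ _
  cases a <;> simp [le]
theorem le_top' (a : Fan I) : a ≤ top := by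
  change le _ _
  cases a <;> simp [le]
theorem le_bot' {a : Fan I} : a ≤ bot ↔ a = bot := by
  change le _ _ ↔ _
  cases a <;> simp [le]
theorem top_le' {a : Fan I} : top ≤ a ↔ a = top := by
  change le _ _ ↔ _
  cases a <;> simp [le]
theorem mid_le {i j : I} {n m : ℕ} : mid i n ≤ mid j m ↔ i = j ∧ n ≤ m := Iff.rfl

theorem exists_lub (s : Set (Fan I)) : ∃ a, IsLUB s a := by
  classical
  by_cases h0 : bot ∈ upperBounds s
  · exact ⟨bot, h0, fun b _ => bot_le' b⟩
  by_cases h1 : ∃ i n, mid i n ∈ upperBounds s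
  · obtain ⟨i, hi⟩ := h1
    refine ⟨mid i (Nat.find hi), Nat.find_spec hi, ?_⟩
    intro u hu
    cases u with
    | bot => exact absurd hu h0
    | top => exact le_top' _
    | mid j m =>
      have : j = i := by
        obtain ⟨n, hn⟩ := hi
        by_contra hne
        apply h0
        intro x hx
        have h2 := hn hx
        have h3 := hu hx
        cases x with
        | bot => exact bot_le' _
        | top => simp [top_le'] at h2
        | mid k l => exact absurd (h3.1.symm.trans h2.1) hne
      subst this
      exact ⟨rfl, Nat.find_min' hi hu⟩
  · refine ⟨top, fun x _ => le_top' x, ?_⟩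
    intro u hu
    cases u with
    | bot => exact absurd hu h0
    | top => exact le_top' _
    | mid j m => exact absurd ⟨j, m, hu⟩ h1

noncomputable instance : SupSet (Fan I) := ⟨fun s => (exists_lub s).choose⟩

noncomputable instance : CompleteLattice (Fan I) :=
  completeLatticeOfSup (Fan I) (fun s => (exists_lub s).choose_spec)

theorem directed_cases {D : Set (Fan I)} (hne : D.Nonempty) (hd : DirectedOn (· ≤ ·) D)
    {s : Fan I} (hs : IsLUB D s) :
    s ∈ D ∨ (s = top ∧ ∃ i, ∀ n, ∃ m, n ≤ m ∧ mid i m ∈ D) := by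
  by_cases hsD : s ∈ D
  · exact Or.inl hsD
  right
  have hb : s ≠ bot := by
    rintro rfl
    obtain ⟨x, hx⟩ := hne
    exact hsD (le_bot'.1 (hs.1 hx) ▸ hx)
  cases s with
  | bot => exact absurd rfl hb
  | mid i n =>
    exfalso
    cases n with
    | zero =>
      apply hb
      apply le_bot'.1
      apply hs.2
      intro x hx
      have h2 := hs.1 hx
      cases x with
      | bot => exact bot_le' _
      | top => simp [top_le'] at h2
      | mid k l =>
        obtain ⟨rfl, h3⟩ := h2
        obtain rfl : l = 0 := by omega
        exact absurd hx hsD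
    | succ n =>
      have : mid i (n+1) ≤ mid i n := by
        apply hs.2
        intro x hx
        have h2 := hs.1 hx
        cases x with
        | bot => exact bot_le' _
        | top => simp [top_le'] at h2
        | mid k l =>
          obtain ⟨rfl, h3⟩ := h2
          refine ⟨rfl, ?_⟩
          by_contra h4
          obtain rfl : l = n + 1 := by omega
          exact absurd hx hsD
      have := this.2
      omega
  | top =>
    refine ⟨rfl, ?_⟩
    have h1 : ∃ i k, mid i k ∈ D := by
      by_contra h1
      push Not at h1
      apply hb
      apply le_bot'.1
      apply hs.2
      intro x hx
      cases x with
      | bot => exact bot_le' _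
      | top => exact absurd hx hsD
      | mid k l => exact absurd hx (h1 k l)
    obtain ⟨i, k, hk⟩ := h1
    refine ⟨i, fun n => ?_⟩
    have h2 : ∃ x ∈ D, ¬ x ≤ mid i n := by
      by_contra h2
      push Not at h2
      have := hs.2 h2
      simp [top_le'] at this
    obtain ⟨x, hx, hxn⟩ := h2
    obtain ⟨y, hy, hxy, hky⟩ := hd x hx _ hk
    cases y with
    | bot => simp [le_bot'] at hky
    | top => exact absurd hy hsD
    | mid j m =>
      obtain ⟨rfl, h3⟩ := hky
      refine ⟨m, ?_, hy⟩
      by_contra h4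
      exact hxn (hxy.trans ⟨rfl, by omega⟩)

theorem chain_lub (i : I) : IsLUB (Set.range (fun n => mid i n)) top := by
  refine ⟨fun x _ => le_top' x, ?_⟩
  intro u hu
  cases u with
  | bot => have := hu ⟨0, rfl⟩; simp [le_bot'] at this
  | top => exact le_top' _
  | mid j m =>
    have := (hu ⟨m+1, rfl⟩).2
    omega

theorem chain_dir (i : I) : DirectedOn (· ≤ ·) (Set.range (fun n => mid i n)) := by
  rintro _ ⟨n, rfl⟩ _ ⟨m, rfl⟩
  exact ⟨_, ⟨max n m, rfl⟩, ⟨rfl, le_max_left _ _⟩, ⟨rfl, le_max_right _ _⟩⟩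

end Fan

open Fan

abbrev ZZ := Fan (ℕ → ℕ) × Fan ℕ

def PU : Fan (ℕ → ℕ) → Fan ℕ → Prop
  | bot, _ => False
  | _, bot => False
  | top, _ => True
  | _, top => True
  | mid α n, mid i m => α i ≤ n ∨ α i ≤ m

theorem PU_mono {x x' : Fan (ℕ → ℕ)} {y y' : Fan ℕ} (hx : x ≤ x') (hy : y ≤ y')
    (h : PU x y) : PU x' y' := by
  change Fan.le _ _ at hx hy
  cases x <;> cases x' <;> cases y <;> cases y' <;> simp_all [PU, Fan.le]
  omega

theorem PU_left {D : Set (Fan (ℕ → ℕ))} (hne : D.Nonempty) (hd : DirectedOn (· ≤ ·) D)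
    {s} (hs : IsLUB D s) {y} (h : PU s y) : ∃ x ∈ D, PU x y := by
  rcases directed_cases hne hd hs with h1 | ⟨rfl, α, hα⟩
  · exact ⟨s, h1, h⟩
  cases y with
  | bot => simp [PU] at h
  | top => obtain ⟨m, _, hm⟩ := hα 0; exact ⟨_, hm, by simp [PU]⟩
  | mid i k => obtain ⟨m, h2, hm⟩ := hα (α i); exact ⟨_, hm, by simp [PU, h2]⟩

theorem PU_right {D : Set (Fan ℕ)} (hne : D.Nonempty) (hd : DirectedOn (· ≤ ·) D)
    {s} (hs : IsLUB D s) {x} (h : PU x s) : ∃ y ∈ D, PU x y := by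
  rcases directed_cases hne hd hs with h1 | ⟨rfl, i, hi⟩
  · exact ⟨s, h1, h⟩
  cases x with
  | bot => simp [PU] at h
  | top => obtain ⟨m, _, hm⟩ := hi 0; exact ⟨_, hm, by simp [PU]⟩
  | mid α k => obtain ⟨m, h2, hm⟩ := hi (α i); exact ⟨_, hm, by simp [PU, h2]⟩

theorem scott_open_iff {Z : Type} [CompleteLattice Z] (U : Set Z) :
    @IsOpen Z (Topology.scott Z Set.univ) U ↔ IsUpperSet U ∧
      ∀ D : Set Z, D.Nonempty → DirectedOn (· ≤ ·) D → ∀ s, IsLUB D s → s ∈ U →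
        ∃ x ∈ D, x ∈ U := by
  let : TopologicalSpace Z := Topology.scott Z Set.univ
  have : Topology.IsScott Z Set.univ := ⟨rfl⟩
  rw [Topology.IsScott.isOpen_iff_isUpperSet_and_dirSupInaccOn (D := Set.univ)]
  refine and_congr Iff.rfl ⟨fun h D h1 h2 s h3 h4 => ?_, fun h D _ h1 h2 s h3 h4 => ?_⟩
  · exact h (Set.mem_univ D) h1 h2 h3 h4
  · exact h D h1 h2 s h3 h4

theorem PU_open : @IsOpen ZZ (Topology.scott ZZ Set.univ) {z | PU z.1 z.2} := by
  rw [scott_open_iff]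
  refine ⟨fun a b hab h => PU_mono hab.1 hab.2 h, ?_⟩
  intro D hne hd s hs h
  have hs' := isLUB_prod.1 hs
  obtain ⟨_, ⟨d1, hd1, rfl⟩, h1⟩ := PU_left (hne.image Prod.fst)
    (hd.mono_comp (fun _ _ h => h.1)) hs'.1 h
  obtain ⟨_, ⟨d2, hd2, rfl⟩, h2⟩ := PU_right (hne.image Prod.snd)
    (hd.mono_comp (fun _ _ h => h.2)) hs'.2 h1
  obtain ⟨d, hd, h3, h4⟩ := hd d1 hd1 d2 hd2
  exact ⟨d, hd, PU_mono h3.1 h4.2 h2⟩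

abbrev XX := Option (((ℕ → ℕ) × ℕ) × (ℕ × ℕ))

def tXX : TopologicalSpace XX where
  IsOpen S := none ∈ S → ∃ (φ : (ℕ → ℕ) → ℕ) (ψ : ℕ → ℕ), ∀ α n i m, φ α ≤ n → ψ i ≤ m →
    some ((α, n), (i, m)) ∈ S
  isOpen_univ := fun _ => ⟨0, 0, by simp⟩
  isOpen_inter S T hS hT := by
    rintro ⟨h1, h2⟩
    obtain ⟨φ, ψ, h⟩ := hS h1
    obtain ⟨φ', ψ', h'⟩ := hT h2
    refine ⟨fun a => max (φ a) (φ' a), fun i => max (ψ i) (ψ' i), ?_⟩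
    intro α n i m hn hm
    simp only [max_le_iff] at hn hm
    exact ⟨h _ _ _ _ hn.1 hm.1, h' _ _ _ _ hn.2 hm.2⟩
  isOpen_sUnion 𝒮 h := by
    rintro ⟨S, hS, h0⟩
    obtain ⟨φ, ψ, h1⟩ := h S hS h0
    exact ⟨φ, ψ, fun α n i m hn hm => ⟨S, hS, h1 α n i m hn hm⟩⟩

def ff : XX → ZZ
  | none => (top, bot)
  | some e => (mid e.1.1 e.1.2, bot)

def gg : XX → ZZ
  | none => (bot, top)
  | some e => (bot, mid e.2.1 e.2.2)

theorem ff_cont : @Continuous XX ZZ tXX (Topology.scott ZZ Set.univ) ff := by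
  let := tXX
  let : TopologicalSpace ZZ := Topology.scott ZZ Set.univ
  refine ⟨fun V hV hn => ?_⟩
  obtain ⟨hu, hV⟩ := (scott_open_iff V).1 hV
  have : ∀ α : ℕ → ℕ, ∃ n, ((mid α n, bot) : ZZ) ∈ V := by
    intro α
    have key := hV ((fun x => (x, bot)) '' Set.range (fun n => mid α n))
      ((Set.range_nonempty _).image _) ?_ (top, bot) ?_ hn
    · obtain ⟨x, ⟨_, ⟨n, rfl⟩, rfl⟩, hx⟩ := key
      exact ⟨n, hx⟩
    · rintro _ ⟨a, ha, rfl⟩ _ ⟨b, hb, rfl⟩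
      obtain ⟨c, hc, h1, h2⟩ := chain_dir α a ha b hb
      exact ⟨_, ⟨c, hc, rfl⟩, ⟨h1, le_rfl⟩, ⟨h2, le_rfl⟩⟩
    · refine ⟨?_, fun u hu => ⟨(chain_lub α).2 ?_, bot_le' _⟩⟩
      · rintro _ ⟨a, ha, rfl⟩
        exact ⟨le_top' _, le_rfl⟩
      · intro a ha
        exact (hu ⟨a, ha, rfl⟩).1
  choose φ hφ using this
  exact ⟨φ, 0, fun α n i m hn _ => hu (b := (mid α n, bot)) (Prod.mk_le_mk.2 ⟨mid_le.2 ⟨rfl, hn⟩, le_rfl⟩) (hφ α)⟩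

theorem gg_cont : @Continuous XX ZZ tXX (Topology.scott ZZ Set.univ) gg := by
  let := tXX
  let : TopologicalSpace ZZ := Topology.scott ZZ Set.univ
  refine ⟨fun V hV hn => ?_⟩
  obtain ⟨hu, hV⟩ := (scott_open_iff V).1 hV
  have : ∀ i : ℕ, ∃ n, ((bot, mid i n) : ZZ) ∈ V := by
    intro α
    have key := hV ((fun x => (bot, x)) '' Set.range (fun n => mid α n))
      ((Set.range_nonempty _).image _) ?_ (bot, top) ?_ hn
    · obtain ⟨x, ⟨_, ⟨n, rfl⟩, rfl⟩, hx⟩ := key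
      exact ⟨n, hx⟩
    · rintro _ ⟨a, ha, rfl⟩ _ ⟨b, hb, rfl⟩
      obtain ⟨c, hc, h1, h2⟩ := chain_dir α a ha b hb
      exact ⟨_, ⟨c, hc, rfl⟩, ⟨le_rfl, h1⟩, ⟨le_rfl, h2⟩⟩
    · refine ⟨?_, fun u hu => ⟨bot_le' _, (chain_lub α).2 ?_⟩⟩
      · rintro _ ⟨a, ha, rfl⟩
        exact ⟨le_rfl, le_top' _⟩
      · intro a ha
        exact (hu ⟨a, ha, rfl⟩).2
  choose ψ hψ using this
  exact ⟨0, ψ, fun α n i m _ hm => hu (b := (bot, mid i m)) (Prod.mk_le_mk.2 ⟨le_rfl, mid_le.2 ⟨rfl, hm⟩⟩) (hψ i)⟩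

open Classical in
noncomputable def kk (e : ((ℕ → ℕ) × ℕ) × (ℕ × ℕ)) : XX → ZZ := fun x =>
  if x = some e then (mid e.1.1 e.1.2, mid e.2.1 e.2.2) else (top, top)

theorem kk_cont (e) : @Continuous XX ZZ tXX (Topology.scott ZZ Set.univ) (kk e) := by
  let := tXX
  let : TopologicalSpace ZZ := Topology.scott ZZ Set.univ
  refine ⟨fun V hV hn => ⟨fun _ => e.1.2 + 1, 0, fun α n i m h1 _ => ?_⟩⟩
  have hne : (some ((α, n), (i, m)) : XX) ≠ some e := by
    intro h
    obtain rfl := Option.some.inj h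
    simp at h1
  simp only [Set.mem_preimage, kk, if_neg hne]
  simpa [kk] using hn

theorem no_lub : ¬ ∃ h : XX → ZZ, @Continuous XX ZZ tXX (Topology.scott ZZ Set.univ) h ∧
    ff ≤ h ∧ gg ≤ h ∧ ∀ k : XX → ZZ, @Continuous XX ZZ tXX (Topology.scott ZZ Set.univ) k →
      ff ≤ k → gg ≤ k → h ≤ k := by
  rintro ⟨h, hc, hf, hg, hk⟩
  have hU := (@Continuous.isOpen_preimage _ _ tXX (Topology.scott ZZ Set.univ) _ hc) _ PU_open
  have h0 : PU (h none).1 (h none).2 :=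
    PU_mono (hf none).1 (hg none).2 (by simp [ff, gg, PU])
  obtain ⟨φ, ψ, H⟩ := hU h0
  let α : ℕ → ℕ := fun i => ψ i + i + 1
  have h1 := H α (φ α) (φ α) (ψ (φ α)) le_rfl le_rfl
  have h2 := hk (kk ((α, φ α), (φ α, ψ (φ α)))) (kk_cont _) ?_ ?_
    (some ((α, φ α), (φ α, ψ (φ α))))
  · have h3 := PU_mono h2.1 h2.2 h1
    simp only [kk, if_true, PU] at h3
    have : α (φ α) = ψ (φ α) + φ α + 1 := rfl
    omega
  · intro x
    by_cases hx : x = some ((α, φ α), (φ α, ψ (φ α)))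
    · subst hx
      simp only [kk, if_true]
      exact ⟨le_rfl, bot_le' _⟩
    · simp only [kk, if_neg hx]
      exact ⟨le_top' _, le_top' _⟩
  · intro x
    by_cases hx : x = some ((α, φ α), (φ α, ψ (φ α)))
    · subst hx
      simp only [kk, if_true]
      exact ⟨bot_le' _, le_rfl⟩
    · simp only [kk, if_neg hx]
      exact ⟨le_top' _, le_top' _⟩

/-- There exist a topological space `X`, a complete lattice `Z`, and continuous functions
`f, g : X → Z` (with the Scott topology on `Z`) such that `{f, g}` has no least upper bound
in the pointwise-ordered poset of continuous functions from `X` to `Z`; in particular this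
poset is not bounded complete. -/
theorem stmt_1 : ∃ (X Z : Type) (tX : TopologicalSpace X) (cZ : CompleteLattice Z),
    @NoLubOfPairAndNotBoundedComplete X Z tX cZ := by
  refine ⟨XX, ZZ, tXX, inferInstance, ff, gg, ff_cont, gg_cont, no_lub, ?_⟩
  intro H
  apply no_lub
  have key := H {ff, gg} ?_ ⟨fun _ => (top, top), ?_, ?_⟩
  · obtain ⟨s, hs, h1, h2⟩ := key
    refine ⟨s, hs, h1 _ (by simp), h1 _ (by simp), fun k hk h3 h4 => h2 k hk ?_⟩
    rintro j (rfl | rfl)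
    exacts [h3, h4]
  · rintro j (rfl | rfl)
    exacts [ff_cont, gg_cont]
  · let := tXX
    let : TopologicalSpace ZZ := Topology.scott ZZ Set.univ
    exact continuous_const
  · intro j _ x
    exact ⟨le_top' _, le_top' _⟩
end

section
/- There exist a topological space X, a complete lattice Z, and two functions f, g : X → Z, each continuous with respect to the topology on X and the Scott topology on Z, such that the pointwise supremum h : X → Z defined by h(x) = f(x) ⊔ g(x) is not continuous with respect to the topology on X and the Scott topology on Z. -/
/-- On `X` a topological space and `Z` a complete lattice with the Scott topology:
there exist continuous `f g : X → Z` whose pointwise supremum is not continuous. -/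
def PointwiseSupDiscontinuous (X Z : Type) [TopologicalSpace X] [CompleteLattice Z] : Prop :=
  letI : TopologicalSpace Z := Topology.scott Z Set.univ
  ∃ f g : X → Z, Continuous f ∧ Continuous g ∧ ¬ Continuous (fun x => f x ⊔ g x)

open Topology TopologicalSpace

inductive CA : Type
  | bot : CA
  | pt : ℕ → ℕ → CA
  | top : CA

namespace CA

def le : CA → CA → Prop
  | bot, _ => True
  | _, top => True
  | pt n m, pt n' m' => n = n' ∧ m ≤ m'
  | _, _ => False

instance : PartialOrder CA where
  le := le
  le_refl a := by cases a <;> simp [le]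
  le_trans a b c := by cases a <;> cases b <;> cases c <;> simp [le] <;> grind
  le_antisymm a b := by cases a <;> cases b <;> simp [le] <;> grind

theorem bot_le' (a : CA) : bot ≤ a := by cases a <;> trivial
theorem le_top' (a : CA) : a ≤ top := by cases a <;> trivial
theorem pt_le {n m n' m' : ℕ} : pt n m ≤ pt n' m' ↔ n = n' ∧ m ≤ m' := Iff.rfl
theorem not_top_le_pt {n m : ℕ} : ¬ top ≤ pt n m := fun h => h
theorem not_top_le_bot : ¬ top ≤ bot := fun h => h
theorem not_pt_le_bot {n m : ℕ} : ¬ pt n m ≤ bot := fun h => h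

theorem exists_lub (s : Set CA) : ∃ a, IsLUB s a := by
  classical
  by_cases h0 : bot ∈ upperBounds s
  · exact ⟨bot, h0, fun b _ => bot_le' b⟩
  by_cases h1 : ∃ n m, pt n m ∈ upperBounds s
  · obtain ⟨n, hn⟩ := h1
    refine ⟨pt n (Nat.find hn), Nat.find_spec hn, fun b hb => ?_⟩
    cases b with
    | bot => exact absurd hb h0
    | top => exact le_top' _
    | pt n' m' =>
      have : n = n' := by
        by_contra hne
        apply h0
        intro x hx
        have h1 := hb hx
        have h2 := Nat.find_spec hn hx
        cases x with
        | bot => exact bot_le' _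
        | top => exact absurd h1 not_top_le_pt
        | pt a b => rw [pt_le] at h1 h2; omega
      subst this
      exact pt_le.2 ⟨rfl, Nat.find_min' hn hb⟩
  · refine ⟨top, fun x _ => le_top' x, fun b hb => ?_⟩
    cases b with
    | bot => exact absurd hb h0
    | top => exact le_top' _
    | pt n m => exact absurd ⟨n, m, hb⟩ h1

noncomputable instance : SupSet CA := ⟨fun s => (exists_lub s).choose⟩

noncomputable instance : CompleteLattice CA :=
  completeLatticeOfSup CA fun s => (exists_lub s).choose_spec

instance : TopologicalSpace CA := Topology.scott CA Set.univ
instance : IsScott CA Set.univ := ⟨rfl⟩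

def UU (φ : ℕ → ℕ) (k : ℕ) : Set CA :=
  {a | a = top ∨ ∃ n m, a = pt n m ∧ (n < k ∨ φ n < m)}

theorem UU_upper (φ : ℕ → ℕ) (k : ℕ) : IsUpperSet (UU φ k) := by
  rintro a b hab (rfl | ⟨n, m, rfl, h⟩)
  · cases b with
    | bot => exact absurd hab not_top_le_bot
    | top => exact Or.inl rfl
    | pt n m => exact absurd hab not_top_le_pt
  · cases b with
    | bot => exact absurd hab not_pt_le_bot
    | top => exact Or.inl rfl
    | pt n' m' =>
      rw [pt_le] at hab
      obtain ⟨rfl, h2⟩ := hab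
      exact Or.inr ⟨n, m', rfl, by omega⟩

theorem pt_mem_UU {φ : ℕ → ℕ} {k n m : ℕ} : pt n m ∈ UU φ k ↔ (n < k ∨ φ n < m) := by
  simp [UU]

theorem UU_open (φ : ℕ → ℕ) (k : ℕ) : IsOpen (UU φ k) := by
  rw [IsScott.isOpen_iff_isUpperSet_and_dirSupInaccOn (D := Set.univ)]
  refine ⟨UU_upper φ k, ?_⟩
  intro D _ hne hdir a ha haU
  by_contra hempty
  have hD : ∀ x ∈ D, x ∉ UU φ k := fun x hx hU => hempty ⟨x, hx, hU⟩
  have key : ∃ n, k ≤ n ∧ pt n (φ n) ∈ upperBounds D := by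
    by_cases hb : ∃ n m, pt n m ∈ D
    · obtain ⟨n, m, hnm⟩ := hb
      have := hD _ hnm
      rw [pt_mem_UU] at this
      refine ⟨n, by omega, fun x hx => ?_⟩
      obtain ⟨z, hz, h1, h2⟩ := hdir _ hnm _ hx
      have hzU := hD z hz
      cases z with
      | bot => exact absurd h1 not_pt_le_bot
      | top => exact absurd (Or.inl rfl) hzU
      | pt n' m' =>
        rw [pt_mem_UU] at hzU
        obtain ⟨rfl, h1⟩ := pt_le.1 h1
        exact le_trans h2 (pt_le.2 ⟨rfl, by omega⟩)
    · refine ⟨k, le_rfl, fun x hx => ?_⟩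
      cases x with
      | bot => exact bot_le' _
      | top => exact absurd (Or.inl rfl) (hD _ hx)
      | pt n m => exact absurd ⟨n, m, hx⟩ hb
  obtain ⟨n, hn, hub⟩ := key
  have := UU_upper φ k (ha.2 hub) haU
  rw [pt_mem_UU] at this
  omega

def UO (φ : ℕ → ℕ) (k : ℕ) : Opens CA := ⟨UU φ k, UU_open φ k⟩

theorem UO_mono (φ : ℕ → ℕ) : Monotone (UO φ) := by
  rintro k l hkl a (rfl | ⟨n, m, rfl, h⟩)
  · exact Or.inl rfl
  · exact Or.inr ⟨n, m, rfl, by omega⟩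

theorem mem_iSup_UO {φ : ℕ → ℕ} {a : CA} :
    a ∈ (⨆ k, UO φ k) ↔ (a = top ∨ ∃ n m, a = pt n m) := by
  rw [Opens.mem_iSup]
  constructor
  · rintro ⟨k, (rfl | ⟨n, m, rfl, h⟩)⟩
    · exact Or.inl rfl
    · exact Or.inr ⟨n, m, rfl⟩
  · rintro (rfl | ⟨n, m, rfl⟩)
    · exact ⟨0, Or.inl rfl⟩
    · exact ⟨n + 1, Or.inr ⟨n, m, rfl, by omega⟩⟩

theorem iSup_UO_eq (φ ψ : ℕ → ℕ) : (⨆ k, UO φ k) = ⨆ k, UO ψ k := by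
  ext a
  exact mem_iSup_UO.trans mem_iSup_UO.symm

theorem exists_pt_mem {V : Set CA} (hV : IsOpen V) (ht : top ∈ V) (n : ℕ) : ∃ m, pt n m ∈ V := by
  rw [IsScott.isOpen_iff_isUpperSet_and_dirSupInaccOn (D := Set.univ)] at hV
  have hlub : IsLUB (Set.range (pt n)) top := by
    refine ⟨fun x _ => le_top' x, fun b hb => ?_⟩
    cases b with
    | bot => exact absurd (hb ⟨0, rfl⟩) not_pt_le_bot
    | top => exact le_top' _
    | pt n' m' =>
      have := pt_le.1 (hb ⟨m' + 1, rfl⟩)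
      omega
  have hdir : DirectedOn (· ≤ ·) (Set.range (pt n)) := by
    rintro _ ⟨a, rfl⟩ _ ⟨b, rfl⟩
    exact ⟨pt n (max a b), ⟨_, rfl⟩, pt_le.2 ⟨rfl, le_max_left _ _⟩, pt_le.2 ⟨rfl, le_max_right _ _⟩⟩
  obtain ⟨_, ⟨m, rfl⟩, h⟩ := hV.2 (Set.mem_univ _) (Set.range_nonempty _) hdir hlub ht
  exact ⟨m, h⟩

end CA

theorem scott_left (A B : Type) [CompleteLattice A] [CompleteLattice B] :
    ScottContinuous (fun a : A => (a, (⊥ : B))) := by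
  intro d hne _ a ha
  refine ⟨?_, fun b hb => ⟨ha.2 fun x hx => (hb ⟨x, hx, rfl⟩).1, bot_le⟩⟩
  rintro _ ⟨x, hx, rfl⟩
  exact ⟨ha.1 hx, le_rfl⟩

theorem scott_right (A B : Type) [CompleteLattice A] [CompleteLattice B] :
    ScottContinuous (fun b : B => ((⊥ : A), b)) := by
  intro d hne _ a ha
  refine ⟨?_, fun b hb => ⟨bot_le, ha.2 fun x hx => (hb ⟨x, hx, rfl⟩).2⟩⟩
  rintro _ ⟨x, hx, rfl⟩
  exact ⟨le_rfl, ha.1 hx⟩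

theorem cont_of_scott {A B : Type} [Preorder A] [Preorder B] {f : A → B} (h : ScottContinuous f) :
    @Continuous A B (Topology.scott A Set.univ) (Topology.scott B Set.univ) f := by
  letI : TopologicalSpace A := Topology.scott A Set.univ
  letI : TopologicalSpace B := Topology.scott B Set.univ
  haveI : IsScott A Set.univ := ⟨rfl⟩
  haveI : IsScott B Set.univ := ⟨rfl⟩
  exact (IsScott.scottContinuousOn_iff_continuous (D := Set.univ) (fun _ _ _ => trivial)).1
    (scottContinuousOn_univ.2 h)

theorem mem_open : @IsOpen (CA × Opens CA) (Topology.scott _ Set.univ) {p | p.1 ∈ p.2} := by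
  letI : TopologicalSpace (CA × Opens CA) := Topology.scott _ Set.univ
  haveI : IsScott (CA × Opens CA) Set.univ := ⟨rfl⟩
  rw [IsScott.isOpen_iff_isUpperSet_and_dirSupInaccOn (D := Set.univ)]
  constructor
  · rintro ⟨a, U⟩ ⟨b, V⟩ ⟨h1, h2⟩ h
    exact h2 (IsScott.isUpperSet_of_isOpen (D := Set.univ) U.isOpen h1 h)
  · rintro D - hne hdir ⟨a, U⟩ hlub (haU : a ∈ U)
    rw [isLUB_prod] at hlub
    obtain ⟨h1, h2⟩ := hlub
    simp only at h1 h2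
    rw [h2.sSup_eq.symm, Opens.mem_sSup] at haU
    obtain ⟨V, ⟨⟨b, _⟩, hp, rfl⟩, haV⟩ := haU
    have hV := (IsScott.isOpen_iff_isUpperSet_and_dirSupInaccOn (D := Set.univ)).1 (Opens.isOpen _ : IsOpen ((_ : Opens CA) : Set CA)) |>.2
      (Set.mem_univ _) (hne.image Prod.fst) (hdir.fst) h1 haV
    obtain ⟨_, ⟨q, hq, rfl⟩, hqV⟩ := hV
    obtain ⟨r, hr, hpr, hqr⟩ := hdir _ hp _ hq
    exact ⟨r, hr, hpr.2 (IsScott.isUpperSet_of_isOpen (D := Set.univ) (Opens.isOpen _) hqr.1 hqV)⟩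

theorem stmt_2 : ∃ (X Z : Type) (tX : TopologicalSpace X) (cZ : CompleteLattice Z),
    @PointwiseSupDiscontinuous X Z tX cZ := by
  letI tO : TopologicalSpace (Opens CA) := Topology.scott _ Set.univ
  haveI : IsScott (Opens CA) Set.univ := ⟨rfl⟩
  refine ⟨CA × Opens CA, CA × Opens CA, instTopologicalSpaceProd, inferInstance, ?_⟩
  refine ⟨fun p => (p.1, ⊥), fun p => (⊥, p.2), ?_, ?_, ?_⟩
  · exact @Continuous.comp _ _ _ instTopologicalSpaceProd _ (Topology.scott _ Set.univ) _ _
      (cont_of_scott (scott_left CA (Opens CA))) continuous_fst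
  · exact @Continuous.comp _ _ _ instTopologicalSpaceProd _ (Topology.scott _ Set.univ) _ _
      (cont_of_scott (scott_right CA (Opens CA))) continuous_snd
  · intro hc
    have ho := @IsOpen.preimage _ _ instTopologicalSpaceProd (Topology.scott _ Set.univ) _ hc _
      mem_open
    have ho' : @IsOpen (CA × Opens CA) instTopologicalSpaceProd {p | p.1 ∈ p.2} := by
      convert ho using 1
      ext p
      simp
    obtain ⟨V, W, hV, hW, htV, htW, hsub⟩ :=
      isOpen_prod_iff.1 ho' CA.top (⨆ k, CA.UO (fun _ => 0) k)
        (show CA.top ∈ (⨆ k, CA.UO (fun _ => 0) k) from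
          CA.mem_iSup_UO.2 (Or.inl rfl))
    choose φ hφ using CA.exists_pt_mem hV htV
    rw [CA.iSup_UO_eq _ φ] at htW
    have hW2 := ((IsScott.isOpen_iff_isUpperSet_and_dirSupInaccOn (D := Set.univ)).1 hW).2
      (Set.mem_univ _) (Set.range_nonempty (CA.UO φ)) (CA.UO_mono φ).directed_le.directedOn_range
      (isLUB_iSup) htW
    obtain ⟨_, ⟨k, rfl⟩, hk⟩ := hW2
    have : CA.pt k (φ k) ∈ CA.UU φ k := hsub (Set.mk_mem_prod (hφ k) hk)
    rw [CA.pt_mem_UU] at this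
    omega
end

section
/- Let X₁ be a partially ordered set and let X₂ be the collection of all Scott open subsets of X₁, partially ordered by set-theoretic inclusion. Then the set E = {(x₁, x₂) ∈ X₁ × X₂ : x₁ ∈ x₂} is open in the Scott topology of the componentwise partial order on X₁ × X₂. -/
theorem scott_isOpen_iff_aux {α : Type*} [Preorder α] (u : Set α) :
    (Topology.scott α Set.univ).IsOpen u ↔ IsUpperSet u ∧ ∀ d : Set α, d.Nonempty →
      DirectedOn (· ≤ ·) d → ∀ a, IsLUB d a → a ∈ u → (d ∩ u).Nonempty := by
  letI : TopologicalSpace α := Topology.scott α Set.univ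
  haveI : Topology.IsScott α Set.univ := ⟨rfl⟩
  have h := Topology.IsScott.isOpen_iff_isUpperSet_and_dirSupInaccOn (α := α) (D := Set.univ) (s := u)
  refine h.trans (and_congr_right fun _ => ?_)
  constructor
  · intro h d hn hd a ha hau
    exact h (Set.mem_univ d) hn hd ha hau
  · intro h d _ hn hd a ha hau
    exact h d hn hd a ha hau



/-- Let `X₁` be a partially ordered set and let `X₂` be the collection of all Scott open
subsets of `X₁`, partially ordered by set-theoretic inclusion. Then the set
`E = {(x₁, x₂) : x₁ ∈ x₂}` is open in the Scott topology of the componentwise partial order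
on `X₁ × X₂`. -/
theorem stmt_7 (X₁ : Type) [PartialOrder X₁] :
    (Topology.scott (X₁ × {U : Set X₁ // (Topology.scott X₁ Set.univ).IsOpen U})
        Set.univ).IsOpen
      {p : X₁ × {U : Set X₁ // (Topology.scott X₁ Set.univ).IsOpen U} | p.1 ∈ p.2.val} := by
  rw [scott_isOpen_iff_aux]
  constructor
  · rintro ⟨x, U⟩ ⟨y, V⟩ ⟨h1, h2⟩ hx
    exact h2 (((scott_isOpen_iff_aux _).1 U.2).1 h1 hx)
  · rintro D hn hd ⟨a, U⟩ hlub haU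
    have hlub' := isLUB_prod.1 hlub
    have hW : (Topology.scott X₁ Set.univ).IsOpen (⋃ p ∈ D, p.2.val) := by
      letI : TopologicalSpace X₁ := Topology.scott X₁ Set.univ
      exact isOpen_biUnion fun p _ => p.2.2
    have hUW : U ≤ ⟨_, hW⟩ := by
      apply hlub'.2.2
      rintro _ ⟨p, hp, rfl⟩
      exact Set.subset_biUnion_of_mem (u := fun p => p.2.val) hp
    have haW := hUW haU
    simp only [Set.mem_iUnion] at haW
    obtain ⟨p, hp, hap⟩ := haW
    have hV := (scott_isOpen_iff_aux _).1 p.2.2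
    obtain ⟨_, ⟨q, hq, rfl⟩, hqV⟩ := hV.2 (Prod.fst '' D) (hn.image _) (by
      rintro _ ⟨x, hx, rfl⟩ _ ⟨y, hy, rfl⟩
      obtain ⟨z, hz, h1, h2⟩ := hd x hx y hy
      exact ⟨z.1, ⟨z, hz, rfl⟩, h1.1, h2.1⟩) a hlub'.1 hap
    obtain ⟨z, hz, h1, h2⟩ := hd p hp q hq
    exact ⟨z, hz, h1.2 (hV.1 h2.1 hqV)⟩
end

section
/- Let X be a partially ordered set equipped with its Scott topology, and let Z be a bounded complete dcpo, i.e., a partially ordered set in which every directed subset has a least upper bound and every subset that has an upper bound has a least upper bound. Then the poset of functions X → Z that are continuous with respect to the Scott topology on X and the Scott topology on Z, ordered pointwise, is bounded complete: every set F of such continuous functions that has an upper bound (among such continuous functions) has a least upper bound, namely the pointwise supremum g(x) = sup { f(x) : f ∈ F }, which is itself Scott continuous. -/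
/-- Let `X` be a partially ordered set equipped with its Scott topology, and let `Z` be a
bounded complete dcpo: every nonempty directed subset has a least upper bound, and every
subset that has an upper bound has a least upper bound. Then the poset of Scott continuous
functions `X → Z`, ordered pointwise, is bounded complete: every set `F` of such continuous
functions that has a continuous upper bound has a least upper bound among the continuous
functions, namely the pointwise supremum `g` (with `g x` the least upper bound of
`{f x : f ∈ F}`), which is itself Scott continuous. -/
theorem stmt_9 (X Z : Type) [PartialOrder X] [PartialOrder Z]
    (hdcpo : ∀ d : Set Z, d.Nonempty → DirectedOn (· ≤ ·) d → ∃ a, IsLUB d a)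
    (hbc : ∀ s : Set Z, (∃ b, b ∈ upperBounds s) → ∃ a, IsLUB s a)
    (F : Set (X → Z))
    (hF : ∀ f ∈ F, @Continuous X Z (Topology.scott X Set.univ) (Topology.scott Z Set.univ) f)
    (hbdd : ∃ b : X → Z,
      @Continuous X Z (Topology.scott X Set.univ) (Topology.scott Z Set.univ) b ∧
      ∀ f ∈ F, f ≤ b) :
    ∃ g : X → Z,
      (∀ x : X, IsLUB {z : Z | ∃ f ∈ F, f x = z} (g x)) ∧
      @Continuous X Z (Topology.scott X Set.univ) (Topology.scott Z Set.univ) g ∧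
      (∀ f ∈ F, f ≤ g) ∧
      (∀ b : X → Z,
        @Continuous X Z (Topology.scott X Set.univ) (Topology.scott Z Set.univ) b →
        (∀ f ∈ F, f ≤ b) → g ≤ b) := by
  have key : ∀ f : X → Z,
      @Continuous X Z (Topology.scott X Set.univ) (Topology.scott Z Set.univ) f ↔
        ScottContinuousOn Set.univ f := by
    intro f
    letI : TopologicalSpace X := Topology.scott X Set.univ
    letI : TopologicalSpace Z := Topology.scott Z Set.univ
    haveI : Topology.IsScott X Set.univ := ⟨rfl⟩
    haveI : Topology.IsScott Z Set.univ := ⟨rfl⟩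
    exact (Topology.IsScott.scottContinuousOn_iff_continuous (fun _ _ _ => Set.mem_univ _)).symm
  simp only [key] at hF hbdd ⊢
  obtain ⟨b, hb, hFb⟩ := hbdd
  have hex : ∀ x : X, ∃ a, IsLUB {z : Z | ∃ f ∈ F, f x = z} a := by
    intro x
    apply hbc
    refine ⟨b x, ?_⟩
    rintro z ⟨f, hf, rfl⟩
    exact hFb f hf x
  choose g hg using hex
  have hle : ∀ f ∈ F, f ≤ g := fun f hf x => (hg x).1 ⟨f, hf, rfl⟩
  refine ⟨g, hg, ?_, hle, ?_⟩
  · intro d _ hne hdir a ha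
    constructor
    · rintro _ ⟨x, hx, rfl⟩
      apply (hg x).2
      rintro z ⟨f, hf, rfl⟩
      exact ((hF f hf (Set.mem_univ d) hne hdir ha).1 ⟨x, hx, rfl⟩).trans (hle f hf a)
    · intro u hu
      apply (hg a).2
      rintro z ⟨f, hf, rfl⟩
      apply (hF f hf (Set.mem_univ d) hne hdir ha).2
      rintro _ ⟨x, hx, rfl⟩
      exact (hle f hf x).trans (hu ⟨x, hx, rfl⟩)
  · intro c _ hc x
    apply (hg x).2
    rintro z ⟨f, hf, rfl⟩
    exact hc f hf x
end

section
/- Let X be a topological space, Z a complete lattice, and f, g : X → Z two functions continuous with respect to the topology on X and the Scott topology on Z. Then the following are equivalent: (1) the set {f, g} has a least upper bound in the poset of continuous functions from X to Z (with Scott topology on Z) ordered pointwise; (2) the pointwise supremum h : X → Z, h(x) = f(x) ⊔ g(x), is continuous with respect to the topology on X and the Scott topology on Z. Moreover, if these conditions hold, then the pointwise supremum h is the least upper bound of {f, g} in the poset of continuous functions. -/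
/-- Let `X` be a topological space, `Z` a complete lattice, and `f, g : X → Z` continuous with
respect to the topology on `X` and the Scott topology on `Z`. Then the following are
equivalent: (1) `{f, g}` has a least upper bound in the poset of continuous functions from
`X` to `Z` (Scott topology on `Z`), ordered pointwise; (2) the pointwise supremum
`h x = f x ⊔ g x` is continuous. Moreover, if these conditions hold, then the pointwise
supremum is the least upper bound of `{f, g}` in the poset of continuous functions. -/
theorem stmt_10 (X Z : Type) [TopologicalSpace X] [CompleteLattice Z] (f g : X → Z)
    (hf : @Continuous X Z _ (Topology.scott Z Set.univ) f)
    (hg : @Continuous X Z _ (Topology.scott Z Set.univ) g) :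
    ((∃ h : X → Z, @Continuous X Z _ (Topology.scott Z Set.univ) h ∧
        f ≤ h ∧ g ≤ h ∧
        ∀ k : X → Z, @Continuous X Z _ (Topology.scott Z Set.univ) k →
          f ≤ k → g ≤ k → h ≤ k) ↔
      @Continuous X Z _ (Topology.scott Z Set.univ) (fun x => f x ⊔ g x)) ∧
    (@Continuous X Z _ (Topology.scott Z Set.univ) (fun x => f x ⊔ g x) →
      (f ≤ fun x => f x ⊔ g x) ∧ (g ≤ fun x => f x ⊔ g x) ∧
      ∀ k : X → Z, @Continuous X Z _ (Topology.scott Z Set.univ) k →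
        f ≤ k → g ≤ k → (fun x => f x ⊔ g x) ≤ k) := by
  letI : TopologicalSpace Z := Topology.scott Z Set.univ
  haveI : Topology.IsScott Z Set.univ := ⟨rfl⟩
  have hsup : ∀ k : X → Z, f ≤ k → g ≤ k → (fun x => f x ⊔ g x) ≤ k :=
    fun k h1 h2 x => sup_le (h1 x) (h2 x)
  have hl : f ≤ fun x => f x ⊔ g x := fun x => le_sup_left
  have hr : g ≤ fun x => f x ⊔ g x := fun x => le_sup_right
  refine ⟨⟨?_, fun hc => ⟨_, hc, hl, hr, fun k _ => hsup k⟩⟩,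
    fun _ => ⟨hl, hr, fun k _ => hsup k⟩⟩
  rintro ⟨h, hc, hfh, hgh, hmin⟩
  have key : h = fun x => f x ⊔ g x := by
    refine le_antisymm (fun x0 => ?_) (hsup h hfh hgh)
    classical
    let k : X → Z := fun x => if x ∈ closure {x0} then f x0 ⊔ g x0 else ⊤
    have spec : ∀ u : X → Z, Continuous u → ∀ x ∈ closure {x0}, u x ≤ u x0 := by
      intro u hu x hx
      have hcl : IsClosed (u ⁻¹' Set.Iic (u x0)) :=
        isClosed_Iic.preimage hu
      exact closure_minimal (by simp) hcl hx
    have hk : Continuous k := by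
      refine continuous_def.2 fun U hU => ?_
      have hup : IsUpperSet U := Topology.IsScott.isUpperSet_of_isOpen (D := Set.univ) hU
      by_cases ha : f x0 ⊔ g x0 ∈ U
      · have : k ⁻¹' U = Set.univ := by
          ext x
          simp only [Set.mem_preimage, Set.mem_univ, iff_true, k]
          split_ifs
          · exact ha
          · exact hup le_top ha
        rw [this]; exact isOpen_univ
      · by_cases ht : (⊤ : Z) ∈ U
        · have : k ⁻¹' U = (closure {x0})ᶜ := by
            ext x
            simp only [Set.mem_preimage, Set.mem_compl_iff, k]
            split_ifs with hx <;> simp [ha, ht, hx]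
          rw [this]; exact isClosed_closure.isOpen_compl
        · have : k ⁻¹' U = ∅ := by
            ext x
            simp only [Set.mem_preimage, k]
            split_ifs with hx <;> simp [ha, ht]
          rw [this]; exact isOpen_empty
    have hle : ∀ u : X → Z, Continuous u → u x0 ≤ f x0 ⊔ g x0 → u ≤ k := by
      intro u hu h0 x
      simp only [k]
      split_ifs with hx
      · exact (spec u hu x hx).trans h0
      · exact le_top
    have := hmin k hk (hle f hf le_sup_left) (hle g hg le_sup_right) x0
    have hx0 : x0 ∈ closure ({x0} : Set X) := subset_closure rfl
    simpa only [k, if_pos hx0] using this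
  rw [← key]; exact hc
end

section
/- Let X be a topological space, Z a complete lattice carrying the Scott topology, and f, g : X → Z continuous functions. For every point x₀ ∈ X, the step function s : X → Z defined by s(x) = f(x₀) ⊔ g(x₀) if x lies in the closure of {x₀}, and s(x) = ⊤ (the top element of Z) otherwise, is continuous with respect to the topology on X and the Scott topology on Z, satisfies f(x) ≤ s(x) and g(x) ≤ s(x) for all x ∈ X, and satisfies s(x₀) = f(x₀) ⊔ g(x₀). -/
open Classical in
/-- Let `X` be a topological space, `Z` a complete lattice carrying the Scott topology, and
`f, g : X → Z` continuous. For every `x₀ ∈ X`, the step function `s` with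
`s x = f x₀ ⊔ g x₀` for `x` in the closure of `{x₀}` and `s x = ⊤` otherwise is continuous,
dominates `f` and `g` pointwise, and satisfies `s x₀ = f x₀ ⊔ g x₀`. -/
theorem stmt_11 (X Z : Type) [TopologicalSpace X] [CompleteLattice Z] (f g : X → Z)
    (hf : @Continuous X Z _ (Topology.scott Z Set.univ) f)
    (hg : @Continuous X Z _ (Topology.scott Z Set.univ) g) (x₀ : X) :
    @Continuous X Z _ (Topology.scott Z Set.univ)
      (fun x => if x ∈ closure {x₀} then f x₀ ⊔ g x₀ else ⊤) ∧
    (∀ x : X, f x ≤ if x ∈ closure {x₀} then f x₀ ⊔ g x₀ else ⊤) ∧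
    (∀ x : X, g x ≤ if x ∈ closure {x₀} then f x₀ ⊔ g x₀ else ⊤) ∧
    (if x₀ ∈ closure {x₀} then f x₀ ⊔ g x₀ else ⊤) = f x₀ ⊔ g x₀ := by
  letI : TopologicalSpace Z := Topology.scott Z Set.univ
  haveI : Topology.IsScott Z Set.univ := ⟨rfl⟩
  have key : ∀ h : X → Z, Continuous h → ∀ x ∈ closure {x₀}, h x ≤ h x₀ := by
    intro h hh x hx
    have h1 := image_closure_subset_closure_image hh (Set.mem_image_of_mem h hx)
    rw [Set.image_singleton, Topology.IsScott.closure_singleton] at h1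
    exact h1
  refine ⟨?_, ?_, ?_, ?_⟩
  · refine continuous_def.2 fun U hU => ?_
    have hup : IsUpperSet U := Topology.IsScott.isUpperSet_of_isOpen (D := Set.univ) hU
    by_cases h1 : f x₀ ⊔ g x₀ ∈ U
    · convert isOpen_univ
      refine Set.eq_univ_of_forall fun x => hup ?_ h1
      dsimp only
      split_ifs
      · exact le_rfl
      · exact le_top
    · by_cases h2 : (⊤ : Z) ∈ U
      · convert (isClosed_closure (s := {x₀})).isOpen_compl using 1
        ext x
        by_cases hx : x ∈ closure {x₀} <;> simp [hx, h1, h2]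
      · convert isOpen_empty
        ext x
        by_cases hx : x ∈ closure {x₀} <;> simp [hx, h1, h2]
  · intro x
    split_ifs with hx
    · exact (key f hf x hx).trans le_sup_left
    · exact le_top
  · intro x
    split_ifs with hx
    · exact (key g hg x hx).trans le_sup_right
    · exact le_top
  · exact if_pos (subset_closure (Set.mem_singleton x₀))
end

section
/- Let X₁ and X₂ be complete lattices and let Z = X₁ × X₂ with the componentwise order (which is again a complete lattice). Let E ⊆ X₁ × X₂ be any subset. If the preimage D = { (z, z') ∈ Z × Z : z ⊔ z' ∈ E } of E under the binary supremum function on Z is open in the product topology on Z × Z of the Scott topology on each copy of Z, then E is open in the product topology on X₁ × X₂ of the Scott topology on X₁ and the Scott topology on X₂. -/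
theorem scott_cont_aux {A B : Type} [Preorder A] [Preorder B] (f : A → B)
    (hf : ∀ d : Set A, d.Nonempty → ∀ a, IsLUB d a → IsLUB (f '' d) (f a)) :
    @Continuous A B (Topology.scott A Set.univ) (Topology.scott B Set.univ) f := by
  let := Topology.scott A Set.univ
  let := Topology.scott B Set.univ
  have : Topology.IsScott A Set.univ := ⟨rfl⟩
  have : Topology.IsScott B Set.univ := ⟨rfl⟩
  refine (Topology.IsScott.scottContinuousOn_iff_continuous (D := Set.univ) ?_).1 ?_
  · intro a b _
    trivial
  · intro d _ hd _ a ha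
    exact hf d hd a ha

/-- Let `X₁` and `X₂` be complete lattices and let `Z = X₁ × X₂` with the componentwise order.
Let `E ⊆ X₁ × X₂`. If the preimage `D = {(z, z') : z ⊔ z' ∈ E}` of `E` under the binary
supremum function on `Z` is open in the product topology on `Z × Z` of the Scott topology on
each copy of `Z`, then `E` is open in the product topology on `X₁ × X₂` of the Scott topology
on `X₁` and the Scott topology on `X₂`. -/
theorem stmt_12 (X₁ X₂ : Type) [CompleteLattice X₁] [CompleteLattice X₂] (E : Set (X₁ × X₂))
    (hD : (@instTopologicalSpaceProd (X₁ × X₂) (X₁ × X₂)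
        (Topology.scott (X₁ × X₂) Set.univ) (Topology.scott (X₁ × X₂) Set.univ)).IsOpen
      {p : (X₁ × X₂) × (X₁ × X₂) | p.1 ⊔ p.2 ∈ E}) :
    (@instTopologicalSpaceProd X₁ X₂ (Topology.scott X₁ Set.univ)
      (Topology.scott X₂ Set.univ)).IsOpen E := by
  have h1 : @Continuous X₁ (X₁ × X₂) (Topology.scott X₁ Set.univ)
      (Topology.scott (X₁ × X₂) Set.univ) (fun x => (x, ⊥)) := by
    refine scott_cont_aux _ fun d hd a ha => ⟨?_, ?_⟩
    · rintro _ ⟨x, hx, rfl⟩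
      exact ⟨ha.1 hx, le_rfl⟩
    · intro b hb
      exact ⟨ha.2 fun x hx => (hb ⟨x, hx, rfl⟩).1, bot_le⟩
  have h2 : @Continuous X₂ (X₁ × X₂) (Topology.scott X₂ Set.univ)
      (Topology.scott (X₁ × X₂) Set.univ) (fun x => (⊥, x)) := by
    refine scott_cont_aux _ fun d hd a ha => ⟨?_, ?_⟩
    · rintro _ ⟨x, hx, rfl⟩
      exact ⟨le_rfl, ha.1 hx⟩
    · intro b hb
      exact ⟨bot_le, ha.2 fun x hx => (hb ⟨x, hx, rfl⟩).2⟩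
  have h3 := @Continuous.isOpen_preimage _ _ (_) (_) _
    (@Continuous.prodMap _ _ _ _ (Topology.scott (X₁ × X₂) Set.univ)
      (Topology.scott (X₁ × X₂) Set.univ)
      (Topology.scott X₁ Set.univ) (Topology.scott X₂ Set.univ) _ _ h1 h2) _ hD
  have e : E = Prod.map (fun x : X₁ => ((x, ⊥) : X₁ × X₂)) (fun x : X₂ => ((⊥, x) : X₁ × X₂)) ⁻¹'
      {p : (X₁ × X₂) × (X₁ × X₂) | p.1 ⊔ p.2 ∈ E} := by
    ext ⟨x, y⟩
    simp
  rw [e]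
  exact h3
end

section
/- Let X₁ be the set {⊥} ∪ (ℕ × (ℕ ∪ {ω})) ∪ {⊤} equipped with a partial order ≤ characterized by: ⊥ ≤ x and x ≤ ⊤ for all x, and for i, j ∈ ℕ and p, q ∈ ℕ ∪ {ω}, (i, p) ≤ (j, q) if and only if (i = j and p ≤ q) or (i ≤ j and q = ω). Then X₁ is a complete lattice: every subset S ⊆ X₁ has a least upper bound. -/
/-- The carrier `{⊥} ∪ (ℕ × (ℕ ∪ {ω})) ∪ {⊤}`, realized as `WithBot (WithTop (ℕ × ℕ∞))`. -/
abbrev ModJohnstone : Type := WithBot (WithTop (ℕ × ℕ∞))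

/-- The element `(i, q) ∈ ℕ × (ℕ ∪ {ω})` of the carrier. -/
def ModJohnstone.pair (i : ℕ) (q : ℕ∞) : ModJohnstone :=
  ((((i, q) : ℕ × ℕ∞) : WithTop (ℕ × ℕ∞)) : WithBot (WithTop (ℕ × ℕ∞)))

/-- The element `⊤` of the carrier. -/
def ModJohnstone.top : ModJohnstone := ((⊤ : WithTop (ℕ × ℕ∞)) : WithBot (WithTop (ℕ × ℕ∞)))

/-- The element `⊥` of the carrier. -/
def ModJohnstone.bot : ModJohnstone := (⊥ : WithBot (WithTop (ℕ × ℕ∞)))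

/-- Let `X₁ = {⊥} ∪ (ℕ × (ℕ ∪ {ω})) ∪ {⊤}` with a partial order characterized by: `⊥ ≤ x` and
`x ≤ ⊤` for all `x`, and `(i, p) ≤ (j, q)` iff (`i = j` and `p ≤ q`) or (`i ≤ j` and
`q = ω`). Then `X₁` is a complete lattice: every subset has a least upper bound. -/
theorem stmt_13 (p : PartialOrder ModJohnstone)
    (hbot : ∀ x : ModJohnstone, p.le ModJohnstone.bot x)
    (htop : ∀ x : ModJohnstone, p.le x ModJohnstone.top)
    (hpair : ∀ (i j : ℕ) (q r : ℕ∞),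
      p.le (ModJohnstone.pair i q) (ModJohnstone.pair j r) ↔
        ((i = j ∧ q ≤ r) ∨ (i ≤ j ∧ r = ⊤))) :
    ∀ S : Set ModJohnstone, ∃ a : ModJohnstone, @IsLUB ModJohnstone p.toPreorder.toLE S a := by
  classical
  intro S
  have cases3 : ∀ x : ModJohnstone, x = ModJohnstone.bot ∨ x = ModJohnstone.top ∨
      ∃ i q, x = ModJohnstone.pair i q := by
    intro x
    rcases x with _ | _ | ⟨i, q⟩
    · exact Or.inl rfl
    · exact Or.inr (Or.inl rfl)
    · exact Or.inr (Or.inr ⟨i, q, rfl⟩)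
  by_cases hb : ∀ x ∈ S, p.le x ModJohnstone.bot
  · exact ⟨ModJohnstone.bot, fun x hx => hb x hx, fun u _ => hbot u⟩
  by_cases hP : ∃ i, ∃ r, ∀ x ∈ S, p.le x (ModJohnstone.pair i r)
  · have hQ := Nat.find_spec hP
    have hmin : ∀ j s, (∀ x ∈ S, p.le x (ModJohnstone.pair j s)) → Nat.find hP ≤ j :=
      fun j s h => Nat.find_min' hP ⟨s, h⟩
    generalize Nat.find hP = i at hQ hmin
    obtain ⟨r, hr, hrmin⟩ := WellFounded.has_min (wellFounded_lt (α := ℕ∞))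
      {r | ∀ x ∈ S, p.le x (ModJohnstone.pair i r)} hQ
    refine ⟨ModJohnstone.pair i r, fun x hx => hr x hx, fun u hu => ?_⟩
    have hu' : ∀ x ∈ S, p.le x u := fun x hx => hu hx
    rcases cases3 u with rfl | rfl | ⟨j, s, rfl⟩
    · exact absurd hu' hb
    · exact htop _
    · have hij := hmin j s hu'
      refine (hpair i j r s).2 ?_
      rcases hij.eq_or_lt with rfl | hlt
      · exact Or.inl ⟨rfl, not_lt.1 (hrmin s hu')⟩
      · refine Or.inr ⟨hij, ?_⟩
        by_contra hs
        push Not at hb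
        obtain ⟨x, hx, hxb⟩ := hb
        rcases cases3 x with rfl | rfl | ⟨k, q, rfl⟩
        · exact hxb (p.le_refl _)
        · have h1 := p.le_trans _ _ _ (htop (ModJohnstone.pair (i+1) 0)) (hr _ hx)
          rw [hpair] at h1
          omega
        · have h1 := (hpair _ _ _ _).1 (hr _ hx)
          have h2 := (hpair _ _ _ _).1 (hu' _ hx)
          rcases h2 with h2 | h2
          · omega
          · exact hs h2.2
  · refine ⟨ModJohnstone.top, fun x _ => htop x, fun u hu => ?_⟩
    have hu' : ∀ x ∈ S, p.le x u := fun x hx => hu hx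
    rcases cases3 u with rfl | rfl | ⟨j, s, rfl⟩
    · exact absurd hu' hb
    · exact p.le_refl _
    · exact absurd ⟨j, s, hu'⟩ hP
end

section
/- Let X₁ be the set {⊥} ∪ (ℕ × (ℕ ∪ {ω})) ∪ {⊤} with the partial order ≤ characterized by: ⊥ ≤ x and x ≤ ⊤ for all x, and (i, p) ≤ (j, q) iff (i = j and p ≤ q) or (i ≤ j and q = ω). For every n ∈ ℕ and every function f : ℕ → ℕ, the set V_f = { (i, j) ∈ ℕ × (ℕ ∪ {ω}) : i ≥ n and f(i) ≤ j } ∪ {⊤} is open in the Scott topology on X₁. -/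
theorem scott_open_aux {α : Type*} [Preorder α] (V : Set α)
    (hup : ∀ a b : α, a ≤ b → a ∈ V → b ∈ V)
    (h : ∀ D : Set α, (∀ a ∈ D, ∀ b ∈ D, ∃ c ∈ D, a ≤ c ∧ b ≤ c) → (∀ d ∈ D, d ∉ V) →
      ∃ u, u ∉ V ∧ ∀ d ∈ D, d ≤ u) :
    (Topology.scott α Set.univ).IsOpen V := by
  letI : TopologicalSpace α := Topology.scott α Set.univ
  haveI : Topology.IsScott α Set.univ := ⟨rfl⟩
  change IsOpen V
  rw [Topology.IsScott.isOpen_iff_isUpperSet_and_dirSupInaccOn (D := Set.univ)]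
  refine ⟨fun a b hab ha => hup a b hab ha, ?_⟩
  intro D _ hne hdir a ha haV
  by_contra hcon
  obtain ⟨u, hu, hub⟩ := h D hdir (fun d hd hdV => hcon ⟨d, hd, hdV⟩)
  exact hu (hup a u (ha.2 hub) haV)

/-- Let `X₁ = {⊥} ∪ (ℕ × (ℕ ∪ {ω})) ∪ {⊤}` with the partial order characterized by: `⊥ ≤ x`
and `x ≤ ⊤` for all `x`, and `(i, p) ≤ (j, q)` iff (`i = j` and `p ≤ q`) or (`i ≤ j` and
`q = ω`). For every `n ∈ ℕ` and every `f : ℕ → ℕ`, the set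
`V_f = {(i, j) : i ≥ n and f i ≤ j} ∪ {⊤}` is open in the Scott topology on `X₁`. -/
theorem stmt_14 (p : PartialOrder ModJohnstone)
    (hbot : ∀ x : ModJohnstone, p.le ModJohnstone.bot x)
    (htop : ∀ x : ModJohnstone, p.le x ModJohnstone.top)
    (hpair : ∀ (i j : ℕ) (q r : ℕ∞),
      p.le (ModJohnstone.pair i q) (ModJohnstone.pair j r) ↔
        ((i = j ∧ q ≤ r) ∨ (i ≤ j ∧ r = ⊤)))
    (n : ℕ) (f : ℕ → ℕ) :
    (@Topology.scott ModJohnstone Set.univ p.toPreorder).IsOpen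
      ({x : ModJohnstone | ∃ (i : ℕ) (j : ℕ∞), n ≤ i ∧ (f i : ℕ∞) ≤ j ∧
          x = ModJohnstone.pair i j} ∪ {ModJohnstone.top}) := by
  have cases : ∀ x : ModJohnstone, x = ModJohnstone.bot ∨ x = ModJohnstone.top ∨
      ∃ i q, x = ModJohnstone.pair i q := by
    intro x
    induction x using WithBot.recBotCoe with
    | bot => exact Or.inl rfl
    | coe x =>
      induction x using WithTop.recTopCoe with
      | top => exact Or.inr (Or.inl rfl)
      | coe x => exact Or.inr (Or.inr ⟨x.1, x.2, rfl⟩)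
  have hpt : ∀ i q, ModJohnstone.pair i q ≠ ModJohnstone.top := by
    intro i q h
    simp [ModJohnstone.pair, ModJohnstone.top] at h
  have hpb : ∀ i q, ModJohnstone.pair i q ≠ ModJohnstone.bot := by
    intro i q h
    simp [ModJohnstone.pair, ModJohnstone.bot] at h
  have htb : ModJohnstone.top ≠ ModJohnstone.bot := by
    intro h
    simp [ModJohnstone.top, ModJohnstone.bot] at h
  have hinj : ∀ i q j r, ModJohnstone.pair i q = ModJohnstone.pair j r → i = j ∧ q = r := by
    intro i q j r h
    have h1 := WithTop.coe_injective (WithBot.coe_injective h)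
    exact Prod.mk.inj h1
  have hmem : ∀ i q, ModJohnstone.pair i q ∈ ({x : ModJohnstone | ∃ (i : ℕ) (j : ℕ∞), n ≤ i ∧
      (f i : ℕ∞) ≤ j ∧ x = ModJohnstone.pair i j} ∪ {ModJohnstone.top}) ↔
      n ≤ i ∧ (f i : ℕ∞) ≤ q := by
    intro i q
    constructor
    · rintro (⟨i', q', h1, h2, h3⟩ | h)
      · obtain ⟨rfl, rfl⟩ := hinj _ _ _ _ h3
        exact ⟨h1, h2⟩
      · exact absurd h (hpt i q)
    · rintro ⟨h1, h2⟩
      exact Or.inl ⟨i, q, h1, h2, rfl⟩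
  have hmb : ModJohnstone.bot ∉ ({x : ModJohnstone | ∃ (i : ℕ) (j : ℕ∞), n ≤ i ∧
      (f i : ℕ∞) ≤ j ∧ x = ModJohnstone.pair i j} ∪ {ModJohnstone.top}) := by
    rintro (⟨i', q', h1, h2, h3⟩ | h)
    · exact hpb _ _ h3.symm
    · exact htb h.symm
  have hmt : ModJohnstone.top ∈ ({x : ModJohnstone | ∃ (i : ℕ) (j : ℕ∞), n ≤ i ∧
      (f i : ℕ∞) ≤ j ∧ x = ModJohnstone.pair i j} ∪ {ModJohnstone.top}) := Or.inr rfl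
  generalize ({x : ModJohnstone | ∃ (i : ℕ) (j : ℕ∞), n ≤ i ∧
      (f i : ℕ∞) ≤ j ∧ x = ModJohnstone.pair i j} ∪ {ModJohnstone.top}) = V at *
  have hle_bot : ∀ x, p.le x ModJohnstone.bot → x = ModJohnstone.bot :=
    fun x h => p.le_antisymm _ _ h (hbot x)
  have htop_le : ∀ x, p.le ModJohnstone.top x → x = ModJohnstone.top :=
    fun x h => p.le_antisymm _ _ (htop x) h
  refine @scott_open_aux ModJohnstone p.toPreorder V ?_ ?_
  · intro a b hab ha
    rcases cases b with rfl | rfl | ⟨j, r, rfl⟩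
    · rw [hle_bot a hab] at ha
      exact absurd ha hmb
    · exact hmt
    · rcases cases a with rfl | rfl | ⟨i, q, rfl⟩
      · exact absurd ha hmb
      · exact absurd (htop_le _ hab) (hpt _ _)
      · rw [hmem] at ha ⊢
        rcases (hpair _ _ _ _).1 hab with ⟨rfl, h⟩ | ⟨h, rfl⟩
        · exact ⟨ha.1, ha.2.trans h⟩
        · exact ⟨ha.1.trans h, le_top⟩
  · intro D hD hV
    by_cases hb : ∀ d ∈ D, d = ModJohnstone.bot
    · exact ⟨ModJohnstone.bot, hmb, fun d hd => by rw [hb d hd]; exact hbot _⟩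
    push Not at hb
    obtain ⟨x, hx, hxb⟩ := hb
    rcases cases x with rfl | rfl | ⟨i, q, rfl⟩
    · exact absurd rfl hxb
    · exact absurd hmt (hV _ hx)
    have key : ∀ d ∈ D, ∃ k r, p.le d (ModJohnstone.pair k r) ∧
        ¬ (n ≤ k ∧ (f k : ℕ∞) ≤ r) ∧ ((i = k ∧ q ≤ r) ∨ (i ≤ k ∧ r = ⊤)) := by
      intro d hd
      obtain ⟨e, he, hde, hxe⟩ := hD d hd _ hx
      rcases cases e with rfl | rfl | ⟨k, r, rfl⟩
      · exact absurd (hle_bot _ hxe) (hpb _ _)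
      · exact absurd hmt (hV _ he)
      · exact ⟨k, r, hde, fun h => hV _ he ((hmem _ _).2 h), (hpair _ _ _ _).1 hxe⟩
    by_cases hi : i < n
    · refine ⟨ModJohnstone.pair (n-1) ⊤, fun h => ?_, fun d hd => ?_⟩
      · have := ((hmem _ _).1 h).1
        omega
      · obtain ⟨k, r, h1, h2, h3⟩ := key d hd
        refine p.le_trans _ _ _ h1 ((hpair _ _ _ _).2 (Or.inr ⟨?_, rfl⟩))
        rcases h3 with ⟨rfl, _⟩ | ⟨_, rfl⟩
        · omega
        · have : ¬ n ≤ k := fun h => h2 ⟨h, le_top⟩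
          omega
    · have hi' : n ≤ i := not_lt.1 hi
      have key2 : ∀ d ∈ D, ∃ r : ℕ∞, p.le d (ModJohnstone.pair i r) ∧ r < (f i : ℕ∞) := by
        intro d hd
        obtain ⟨k, r, h1, h2, h3⟩ := key d hd
        rcases h3 with ⟨rfl, _⟩ | ⟨h, rfl⟩
        · exact ⟨r, h1, not_le.1 fun h => h2 ⟨hi', h⟩⟩
        · exact absurd ⟨hi'.trans h, le_top⟩ h2
      have hf : 0 < f i := by
        obtain ⟨r, _, h⟩ := key2 _ hx
        exact_mod_cast lt_of_le_of_lt (zero_le (a := r)) h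
      refine ⟨ModJohnstone.pair i ((f i - 1 : ℕ) : ℕ∞), fun h => ?_, fun d hd => ?_⟩
      · have := ((hmem _ _).1 h).2
        have : f i ≤ f i - 1 := by exact_mod_cast this
        omega
      · obtain ⟨r, h1, h2⟩ := key2 d hd
        refine p.le_trans _ _ _ h1 ((hpair _ _ _ _).2 (Or.inl ⟨rfl, ?_⟩))
        lift r to ℕ using h2.ne_top
        have : r < f i := by exact_mod_cast h2
        have : r ≤ f i - 1 := by omega
        exact_mod_cast this
end

section
/- Let X₁ be the set {⊥} ∪ (ℕ × (ℕ ∪ {ω})) ∪ {⊤} with the partial order ≤ characterized by: ⊥ ≤ x and x ≤ ⊤ for all x, and (i, p) ≤ (j, q) iff (i = j and p ≤ q) or (i ≤ j and q = ω). Then every subset U ⊆ X₁ that is open in the Scott topology on X₁ and satisfies U ≠ ∅ and U ≠ X₁ is of the form V_f = { (i, j) ∈ ℕ × (ℕ ∪ {ω}) : i ≥ n and f(i) ≤ j } ∪ {⊤} for some n ∈ ℕ and some function f : ℕ → ℕ. -/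
theorem scott_upper_aux {α : Type*} (p : Preorder α) (U : Set α)
    (hU : (@Topology.scott α Set.univ p).IsOpen U) (a b : α) (h : p.le a b) (ha : a ∈ U) :
    b ∈ U := by
  let : TopologicalSpace α := Topology.scott α Set.univ
  have : Topology.IsScott α Set.univ := ⟨rfl⟩
  exact Topology.IsScott.isUpperSet_of_isOpen (D := Set.univ) (s := U) hU h ha

theorem scott_seq_aux {α : Type*} (p : Preorder α) (U : Set α)
    (hU : (@Topology.scott α Set.univ p).IsOpen U) (s : ℕ → α)
    (hs : ∀ m n, m ≤ n → p.le (s m) (s n)) (a : α) (h1 : ∀ n, p.le (s n) a)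
    (h2 : ∀ b, (∀ n, p.le (s n) b) → p.le a b) (ha : a ∈ U) : ∃ n, s n ∈ U := by
  let : TopologicalSpace α := Topology.scott α Set.univ
  have : Topology.IsScott α Set.univ := ⟨rfl⟩
  have ⟨_, h2'⟩ := (Topology.IsScott.isOpen_iff_isUpperSet_and_dirSupInaccOn (D := Set.univ)
    (s := U)).1 hU
  obtain ⟨x, ⟨n, rfl⟩, hx⟩ := h2' (Set.mem_univ (Set.range s)) ⟨s 0, 0, rfl⟩ (by
    rintro _ ⟨m, rfl⟩ _ ⟨n, rfl⟩
    exact ⟨s (max m n), ⟨_, rfl⟩, hs _ _ (le_max_left _ _), hs _ _ (le_max_right _ _)⟩)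
    ⟨by rintro _ ⟨n, rfl⟩; exact h1 n, fun b hb => h2 b fun n => hb ⟨n, rfl⟩⟩ ha
  exact ⟨n, hx⟩

theorem ModJohnstone.cases_aux (x : ModJohnstone) :
    x = ModJohnstone.bot ∨ x = ModJohnstone.top ∨ ∃ i j, x = ModJohnstone.pair i j := by
  rcases x with _ | _ | ⟨i, j⟩
  · exact Or.inl rfl
  · exact Or.inr (Or.inl rfl)
  · exact Or.inr (Or.inr ⟨i, j, rfl⟩)

theorem ModJohnstone.pair_inj_aux {i i' : ℕ} {j j' : ℕ∞}
    (h : ModJohnstone.pair i j = ModJohnstone.pair i' j') : i = i' ∧ j = j' := by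
  have := WithTop.coe_injective (WithBot.coe_injective h)
  exact Prod.mk.inj this

theorem ModJohnstone.pair_ne_top_aux {i : ℕ} {j : ℕ∞} :
    ModJohnstone.pair i j ≠ ModJohnstone.top := by
  intro h
  exact WithTop.coe_ne_top (WithBot.coe_injective h)

theorem ModJohnstone.pair_ne_bot_aux {i : ℕ} {j : ℕ∞} :
    ModJohnstone.pair i j ≠ ModJohnstone.bot := by
  intro h
  exact WithBot.coe_ne_bot h

/-- Let `X₁ = {⊥} ∪ (ℕ × (ℕ ∪ {ω})) ∪ {⊤}` with the partial order characterized by: `⊥ ≤ x`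
and `x ≤ ⊤` for all `x`, and `(i, p) ≤ (j, q)` iff (`i = j` and `p ≤ q`) or (`i ≤ j` and
`q = ω`). Then every subset `U` of `X₁` that is Scott open, nonempty, and not all of `X₁` is
of the form `V_f = {(i, j) : i ≥ n and f i ≤ j} ∪ {⊤}` for some `n : ℕ` and `f : ℕ → ℕ`. -/
theorem stmt_15 (p : PartialOrder ModJohnstone)
    (hbot : ∀ x : ModJohnstone, p.le ModJohnstone.bot x)
    (htop : ∀ x : ModJohnstone, p.le x ModJohnstone.top)
    (hpair : ∀ (i j : ℕ) (q r : ℕ∞),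
      p.le (ModJohnstone.pair i q) (ModJohnstone.pair j r) ↔
        ((i = j ∧ q ≤ r) ∨ (i ≤ j ∧ r = ⊤)))
    (U : Set ModJohnstone)
    (hU : (@Topology.scott ModJohnstone Set.univ p.toPreorder).IsOpen U)
    (hne : U ≠ ∅) (hnuniv : U ≠ Set.univ) :
    ∃ (n : ℕ) (f : ℕ → ℕ),
      U = {x : ModJohnstone | ∃ (i : ℕ) (j : ℕ∞), n ≤ i ∧ (f i : ℕ∞) ≤ j ∧
          x = ModJohnstone.pair i j} ∪ {ModJohnstone.top} := by
  classical
  have up := scott_upper_aux p.toPreorder U hU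
  have sq := scott_seq_aux p.toPreorder U hU
  have nb : ModJohnstone.bot ∉ U := fun h =>
    hnuniv (Set.eq_univ_of_forall fun x => up _ _ (hbot x) h)
  have ht : ModJohnstone.top ∈ U := by
    obtain ⟨x, hx⟩ := Set.nonempty_iff_ne_empty.2 hne
    exact up _ _ (htop x) hx
  have lebot : ∀ i j, ¬ p.le (ModJohnstone.pair i j) ModJohnstone.bot := fun i j h =>
    ModJohnstone.pair_ne_bot_aux (p.le_antisymm _ _ h (hbot _))
  have e1 : ∃ n, ModJohnstone.pair n ⊤ ∈ U := by
    refine sq (fun n => ModJohnstone.pair n ⊤) (fun m n h => (hpair _ _ _ _).2 (Or.inr ⟨h, rfl⟩))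
      ModJohnstone.top (fun n => htop _) ?_ ht
    intro b hb
    rcases ModJohnstone.cases_aux b with rfl | rfl | ⟨i, j, rfl⟩
    · exact absurd (hb 0) (lebot _ _)
    · exact htop _
    · have := (hpair _ _ _ _).1 (hb (i + 1))
      omega
  have e2 : ∀ i, ModJohnstone.pair i ⊤ ∈ U → ∃ m : ℕ, ModJohnstone.pair i (m : ℕ∞) ∈ U := by
    intro i hi
    refine sq (fun m => ModJohnstone.pair i (m : ℕ∞))
      (fun m n h => (hpair _ _ _ _).2 (Or.inl ⟨rfl, by exact_mod_cast h⟩))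
      (ModJohnstone.pair i ⊤) (fun n => (hpair _ _ _ _).2 (Or.inl ⟨rfl, le_top⟩)) ?_ hi
    intro b hb
    rcases ModJohnstone.cases_aux b with rfl | rfl | ⟨k, j, rfl⟩
    · exact absurd (hb 0) (lebot _ _)
    · exact htop _
    · refine (hpair _ _ _ _).2 ?_
      by_cases hj : j = ⊤
      · rcases (hpair _ _ _ _).1 (hb 0) with h | h
        · exact Or.inr ⟨h.1.le, hj⟩
        · exact Or.inr h
      · exfalso
        lift j to ℕ using hj
        rcases (hpair _ _ _ _).1 (hb (j + 1)) with h | h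
        · have h2 : j + 1 ≤ j := by exact_mod_cast h.2
          omega
        · exact ENat.natCast_ne_top _ h.2
  have e3 : ∀ i, Nat.find e1 ≤ i → ∃ m : ℕ, ModJohnstone.pair i (m : ℕ∞) ∈ U := fun i hi =>
    e2 i (up _ _ ((hpair _ _ _ _).2 (Or.inr ⟨hi, rfl⟩)) (Nat.find_spec e1))
  refine ⟨Nat.find e1, fun i => if h : Nat.find e1 ≤ i then Nat.find (e3 i h) else 0, ?_⟩
  ext x
  constructor
  · intro hx
    rcases ModJohnstone.cases_aux x with rfl | rfl | ⟨i, j, rfl⟩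
    · exact absurd hx nb
    · exact Or.inr rfl
    · have hi : Nat.find e1 ≤ i :=
        Nat.find_min' e1 (up _ _ ((hpair _ _ _ _).2 (Or.inl ⟨rfl, le_top⟩)) hx)
      refine Or.inl ⟨i, j, hi, ?_, rfl⟩
      beta_reduce
      rw [dif_pos hi]
      by_cases hj : j = ⊤
      · rw [hj]; exact le_top
      · lift j to ℕ using hj
        exact_mod_cast Nat.find_min' (e3 i hi) hx
  · rintro (⟨i, j, hi, hj, rfl⟩ | hx)
    · beta_reduce at hj
      rw [dif_pos hi] at hj
      exact up _ _ ((hpair _ _ _ _).2 (Or.inl ⟨rfl, hj⟩)) (Nat.find_spec (e3 i hi))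
    · rw [Set.mem_singleton_iff.1 hx]; exact ht
end

section
/- Let X₁ be the set {⊥} ∪ (ℕ × (ℕ ∪ {ω})) ∪ {⊤} with the partial order ≤ characterized by: ⊥ ≤ x and x ≤ ⊤ for all x, and (i, p) ≤ (j, q) iff (i = j and p ≤ q) or (i ≤ j and q = ω). Let X₂ be the collection of all Scott open subsets of X₁, partially ordered by set-theoretic inclusion. Then the set E = { (x₁, x₂) ∈ X₁ × X₂ : x₁ ∈ x₂ } is not open in the product topology on X₁ × X₂ of the Scott topology on X₁ and the Scott topology on X₂. -/
theorem scott_open_iff_s16 {α : Type*} [Preorder α] (U : Set α) :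
    (Topology.scott α Set.univ).IsOpen U ↔ IsUpperSet U ∧
      ∀ d : Set α, d.Nonempty → DirectedOn (· ≤ ·) d → ∀ a, IsLUB d a → a ∈ U →
        (d ∩ U).Nonempty := by
  letI : TopologicalSpace α := Topology.scott α Set.univ
  haveI : Topology.IsScott α Set.univ := ⟨rfl⟩
  have h := Topology.IsScott.isOpen_iff_isUpperSet_and_dirSupInaccOn (α := α) (D := Set.univ)
    (s := U)
  refine Iff.trans h (and_congr_right fun _ => ?_)
  constructor
  · intro H d h1 h2 a h3 h4
    exact H (Set.mem_univ d) h1 h2 h3 h4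
  · intro H d _ h1 h2 a h3 h4
    exact H d h1 h2 a h3 h4

theorem abstract_stmt {X : Type} [PartialOrder X] (bot top : X) (pair : ℕ → ℕ∞ → X)
    (hcases : ∀ x, x = bot ∨ x = top ∨ ∃ i q, x = pair i q)
    (hbot : ∀ x, bot ≤ x) (htop : ∀ x, x ≤ top)
    (hpair : ∀ (i j : ℕ) (q r : ℕ∞),
      pair i q ≤ pair j r ↔ ((i = j ∧ q ≤ r) ∨ (i ≤ j ∧ r = ⊤))) :
    ¬ (@instTopologicalSpaceProd X
        {U : Set X // (Topology.scott X Set.univ).IsOpen U}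
        (Topology.scott X Set.univ)
        (Topology.scott {U : Set X // (Topology.scott X Set.univ).IsOpen U} Set.univ)).IsOpen
      {q : X × {U : Set X // (Topology.scott X Set.univ).IsOpen U} | q.1 ∈ q.2.val} := by
  intro hE
  have htopnot : ∀ i (n : ℕ), ¬ top ≤ pair i n := by
    intro i n h
    have := (hpair _ _ _ _).1 ((htop (pair (i+1) 0)).trans h)
    simp at this
  have hpairbot : ∀ i q, pair i q ≤ bot → False := by
    intro i q h
    have := (hpair _ _ _ _).1 (h.trans (hbot (pair (i+1) 0)))
    simp at this
  have key : ∀ x (i j n m : ℕ), x ≠ bot → x ≤ pair i n → x ≤ pair j m → i = j := by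
    intro x i j n m hx h1 h2
    rcases hcases x with rfl | rfl | ⟨k, q, rfl⟩
    · exact absurd rfl hx
    · exact absurd h1 (htopnot _ _)
    · have a := (hpair _ _ _ _).1 h1
      have b := (hpair _ _ _ _).1 h2
      simp at a b
      omega
  have htb : top ≠ bot := fun h => hpairbot 0 0 (h ▸ htop _)
  have hUo : (Topology.scott X Set.univ).IsOpen {x : X | x ≠ bot} := by
    rw [scott_open_iff_s16]
    refine ⟨fun x y hxy hx hy => hx (le_antisymm (hy ▸ hxy) (hbot x)), ?_⟩
    intro d _ _ a ha hab
    by_contra hne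
    refine hab (le_antisymm (ha.2 fun x hx => ?_) (hbot a))
    by_contra hx'
    exact hne ⟨x, hx, fun h => hx' h.le⟩
  have hUno : ∀ (f : ℕ → ℕ) (n : ℕ), (Topology.scott X Set.univ).IsOpen
      {x : X | ∀ i, n ≤ i → ¬ x ≤ pair i (f i)} := by
    intro f n
    rw [scott_open_iff_s16]
    refine ⟨fun x y hxy hx i hi hy => hx i hi (hxy.trans hy), ?_⟩
    intro d hd hdir a ha haU
    by_contra hne
    have hall : ∀ x ∈ d, ∃ i, n ≤ i ∧ x ≤ pair i (f i) := by
      intro x hx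
      by_contra hcon
      push Not at hcon
      exact hne ⟨x, hx, hcon⟩
    by_cases hb : ∀ x ∈ d, x = bot
    · exact haU n le_rfl ((ha.2 fun x hx => (hb x hx).le).trans (hbot _))
    · push Not at hb
      obtain ⟨x0, hx0, hx0b⟩ := hb
      obtain ⟨i, hi, hxi⟩ := hall x0 hx0
      refine haU i hi (ha.2 fun y hy => ?_)
      obtain ⟨z, hz, hxz, hyz⟩ := hdir x0 hx0 y hy
      obtain ⟨j, hj, hzj⟩ := hall z hz
      have := key x0 i j _ _ hx0b hxi (hxz.trans hzj)
      subst this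
      exact hyz.trans hzj
  letI t1 : TopologicalSpace X := Topology.scott X Set.univ
  letI t2 : TopologicalSpace {U : Set X // (Topology.scott X Set.univ).IsOpen U} :=
    Topology.scott {U : Set X // (Topology.scott X Set.univ).IsOpen U} Set.univ
  obtain ⟨V, W, hV, hW, hTV, hUW, hsub⟩ := isOpen_prod_iff.1 hE top ⟨_, hUo⟩ htb
  obtain ⟨hVu, hVd⟩ := (scott_open_iff_s16 V).1 hV
  obtain ⟨hWu, hWd⟩ := (scott_open_iff_s16 W).1 hW
  have h0 : ∃ i0, pair i0 ⊤ ∈ V := by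
    obtain ⟨x, ⟨i, rfl⟩, hx⟩ := hVd (Set.range fun i => pair i ⊤) (Set.range_nonempty _) (by
        rintro _ ⟨i, rfl⟩ _ ⟨j, rfl⟩
        refine ⟨_, ⟨max i j, rfl⟩, ?_, ?_⟩ <;> simp [hpair]) top (by
        refine ⟨fun x _ => htop x, fun b hb => ?_⟩
        rcases hcases b with rfl | rfl | ⟨k, q, rfl⟩
        · exact (hpairbot _ _ (hb ⟨0, rfl⟩)).elim
        · exact le_rfl
        · have := (hpair _ _ _ _).1 (hb ⟨k+1, rfl⟩)
          simp at this) hTV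
    exact ⟨i, hx⟩
  obtain ⟨i0, hi0⟩ := h0
  have h1 : ∀ i, ∃ n : ℕ, i0 ≤ i → pair i n ∈ V := by
    intro i
    by_cases hi : i0 ≤ i
    swap
    · exact ⟨0, fun h => absurd h hi⟩
    have hiV : pair i ⊤ ∈ V := hVu ((hpair _ _ _ _).2 (Or.inr ⟨hi, rfl⟩)) hi0
    obtain ⟨x, ⟨n, rfl⟩, hx⟩ := hVd (Set.range fun n : ℕ => pair i n) (Set.range_nonempty _) (by
        rintro _ ⟨n, rfl⟩ _ ⟨m, rfl⟩
        refine ⟨_, ⟨max n m, rfl⟩, ?_, ?_⟩ <;> simp [hpair]) (pair i ⊤) (by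
        refine ⟨?_, fun b hb => ?_⟩
        · rintro _ ⟨n, rfl⟩
          simp [hpair]
        rcases hcases b with rfl | rfl | ⟨k, q, rfl⟩
        · exact (hpairbot _ _ (hb ⟨0, rfl⟩)).elim
        · exact htop _
        · induction q using ENat.recTopCoe with
          | top =>
            have := (hpair _ _ _ _).1 (hb ⟨0, rfl⟩)
            simp at this
            refine (hpair _ _ _ _).2 (Or.inr ⟨by omega, rfl⟩)
          | coe m =>
            have := (hpair _ _ _ _).1 (hb ⟨m+1, rfl⟩)
            rcases this with ⟨_, h⟩ | ⟨_, h⟩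
            · have h' : m + 1 ≤ m := by exact_mod_cast h
              omega
            · simp at h) hiV
    exact ⟨n, fun _ => hx⟩
  choose f hf using h1
  obtain ⟨x, ⟨n, rfl⟩, hx⟩ := hWd
    (Set.range fun n => (⟨_, hUno f n⟩ : {U : Set X // (Topology.scott X Set.univ).IsOpen U}))
    (Set.range_nonempty _) (by
      rintro _ ⟨n, rfl⟩ _ ⟨m, rfl⟩
      refine ⟨_, ⟨max n m, rfl⟩, ?_, ?_⟩
      · intro x hx i hi
        exact hx i (by omega)
      · intro x hx i hi
        exact hx i (by omega)) ⟨_, hUo⟩ (by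
      constructor
      · rintro _ ⟨n, rfl⟩ x hx hxb
        exact hx n le_rfl (hxb ▸ hbot _)
      · intro b hb x hxb
        by_cases h : ∀ i, 0 ≤ i → ¬ x ≤ pair i (f i)
        · exact hb ⟨0, rfl⟩ h
        · push Not at h
          obtain ⟨i, _, hi⟩ := h
          refine hb ⟨i+1, rfl⟩ ?_
          intro j hj hxj
          have := key x i j _ _ hxb hi hxj
          omega) hUW
  have := hsub (Set.mk_mem_prod (hf (max n i0) (le_max_right _ _)) hx)
  exact this (max n i0) (le_max_left _ _) le_rfl

/-- Let `X₁ = {⊥} ∪ (ℕ × (ℕ ∪ {ω})) ∪ {⊤}` with the partial order characterized by: `⊥ ≤ x`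
and `x ≤ ⊤` for all `x`, and `(i, p) ≤ (j, q)` iff (`i = j` and `p ≤ q`) or (`i ≤ j` and
`q = ω`). Let `X₂` be the collection of all Scott open subsets of `X₁`, partially ordered by
set-theoretic inclusion. Then the set `E = {(x₁, x₂) : x₁ ∈ x₂}` is not open in the product
topology on `X₁ × X₂` of the Scott topology on `X₁` and the Scott topology on `X₂`. -/
theorem stmt_16 (p : PartialOrder ModJohnstone)
    (hbot : ∀ x : ModJohnstone, p.le ModJohnstone.bot x)
    (htop : ∀ x : ModJohnstone, p.le x ModJohnstone.top)
    (hpair : ∀ (i j : ℕ) (q r : ℕ∞),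
      p.le (ModJohnstone.pair i q) (ModJohnstone.pair j r) ↔
        ((i = j ∧ q ≤ r) ∨ (i ≤ j ∧ r = ⊤))) :
    ¬ (@instTopologicalSpaceProd ModJohnstone
        {U : Set ModJohnstone // (@Topology.scott ModJohnstone Set.univ p.toPreorder).IsOpen U}
        (@Topology.scott ModJohnstone Set.univ p.toPreorder)
        (Topology.scott
          {U : Set ModJohnstone // (@Topology.scott ModJohnstone Set.univ p.toPreorder).IsOpen U}
          Set.univ)).IsOpen
      {q : ModJohnstone ×
          {U : Set ModJohnstone // (@Topology.scott ModJohnstone Set.univ p.toPreorder).IsOpen U} |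
        q.1 ∈ q.2.val} := by

  refine @abstract_stmt ModJohnstone p ModJohnstone.bot ModJohnstone.top ModJohnstone.pair
    ?_ hbot htop hpair
  intro x
  rcases x with _ | _ | ⟨i, q⟩
  · exact Or.inl rfl
  · exact Or.inr (Or.inl rfl)
  · exact Or.inr (Or.inr ⟨i, q, rfl⟩)
end
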